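/- arXiv:1407.7347 — 3 statements merged into one kernel-verified Lean document; each statement's English description precedes it below -/
import Mathlib

section
/- Assume g_i^{jk} ∈ ℝ for 0 ≤ i,j,k ≤ 2 with g_i^{jk} = g_i^{kj}, and Σ_{i,j,k=0}^2 g_i^{jk} p_i p_j p_k = 0 for every p = (p₀,p₁,p₂) ∈ ℝ³ satisfying p₀² = p₁² + p₂². Then for every n ∈ ℕ there exists a constant C_n > 0 such that for all T > 0, all f ∈ C^∞([0,T]×ℝ²), and all (t,x) ∈ [0,T]×ℝ² with x ≠ 0: Σ_{|α|≤n} |Γ^α(Σ_{i,j,k=0}^2 g_i^{jk} ∂_i f ∂²_{jk} f)(t,x) − Σ_{i,j,k=0}^2 g_i^{jk}(∂_i f ∂²_{jk} Γ^α f)(t,x)| ≤ C_n Σ_{|β+ν|≤n+1, |β|≤n, |ν|≤n} |ZΓ^β f(t,x)||Γ^ν ∂f(t,x)|. -/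
/-!
Write `Q(u, v) = Σ g_i^{jk} ∂_i u ∂²_{jk} v`. Every field `Γ_a` is a derivation with
`[∂_i, Γ_a] = κ_a ∂_i`, where `κ_a` is `1` for the scaling field and `0` otherwise. Hence
`Γ_a Q(u, v) = Q(Γ_a u, v) + Q(u, Γ_a v) - 3 κ_a Q(u, v)`, and iterating,
`Γ^w Q(f, f) - Q(f, Γ^w f)` is a linear combination of terms `Q(Γ^β f, Γ^γ f)` with
`|β| + |γ| ≤ |w|` and `|γ| < |w|`.

At a fixed point put `η = (-1, x/|x|)`, so that `∂_i + η_i ∂_0` is `0` for `i = 0` and `Z_i`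
otherwise. Substituting `∂_i = (∂_i + η_i ∂_0) - η_i ∂_0` successively for the three derivatives in
`Q(u, v)`, the only term free of `Z` is a multiple of `Σ g_i^{jk} η_i η_j η_k`, which vanishes
because `η` is null. Each remaining term is a product of a `Z`-derivative and a derivative, and the
strict inequality `|γ| < |w|` keeps the word `∂_k Γ^γ` within length `|w|`.
-/

noncomputable section

open Real MeasureTheory Set

/-- A function of time `t` and space `(x, y)`. -/
abbrev F3 : Type := ℝ → ℝ → ℝ → ℝ

/-- Partial derivative in time. -/
def pt (f : F3) : F3 := fun t x y => deriv (fun s => f s x y) t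
/-- Partial derivative in the first space variable. -/
def px (f : F3) : F3 := fun t x y => deriv (fun s => f t s y) x
/-- Partial derivative in the second space variable. -/
def py (f : F3) : F3 := fun t x y => deriv (fun s => f t x s) y

/-- `∂ = (∂_t, ∂_1, ∂_2)`. -/
def pdi : Fin 3 → F3 → F3 := ![pt, px, py]

/-- The scaling field `X = t∂_t + x₁∂₁ + x₂∂₂`. -/
def Xf (f : F3) : F3 := fun t x y => t * pt f t x y + x * px f t x y + y * py f t x y
/-- The rotation field `Ω = x₁∂₂ − x₂∂₁`. -/
def Om (f : F3) : F3 := fun t x y => x * py f t x y - y * px f t x y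
/-- The Lorentz boost `L₁ = t∂₁ + x₁∂_t`. -/
def L1f (f : F3) : F3 := fun t x y => t * px f t x y + x * pt f t x y
/-- The Lorentz boost `L₂ = t∂₂ + x₂∂_t`. -/
def L2f (f : F3) : F3 := fun t x y => t * py f t x y + y * pt f t x y

/-- The family `Γ = (∂_t, ∂_1, ∂_2, X)`. -/
def GammaF : Fin 4 → F3 → F3 := ![pt, px, py, Xf]

/-- Iterated composition `Γ^α` over a word `α`. -/
def GIter : List (Fin 4) → F3 → F3
  | [], f => f
  | a :: l, f => GammaF a (GIter l f)

/-- The family `Λ = (∂_t, ∂_1, ∂_2, Ω, X, L₁, L₂)`. -/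
def LamF : Fin 7 → F3 → F3 := ![pt, px, py, Om, Xf, L1f, L2f]

/-- Iterated composition `Λ^α` over a word `α`. -/
def LIter : List (Fin 7) → F3 → F3
  | [], f => f
  | a :: l, f => LamF a (LIter l f)

/-- Iterated composition `∂^β` over a word `β`. -/
def PIter : List (Fin 3) → F3 → F3
  | [], f => f
  | a :: l, f => pdi a (PIter l f)

/-- `r = |x|`. -/
def rad (x y : ℝ) : ℝ := Real.sqrt (x ^ 2 + y ^ 2)
/-- `σ₋(t,x) = 1 + |t − |x||`. -/
def sm (t x y : ℝ) : ℝ := 1 + |t - rad x y|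
/-- `σ₊(t,x) = 1 + t + |x|`. -/
def sp (t x y : ℝ) : ℝ := 1 + t + rad x y

/-- `f` is a `C^∞` function of `(t, x)`. -/
def Smooth3 (f : F3) : Prop := ContDiff ℝ (⊤ : ℕ∞) (fun p : ℝ × ℝ × ℝ => f p.1 p.2.1 p.2.2)

/-- `Z₁ = ∂₁ + (x₁/|x|)∂_t`. -/
def Z1 (f : F3) : F3 := fun t x y => px f t x y + (x / rad x y) * pt f t x y
/-- `Z₂ = ∂₂ + (x₂/|x|)∂_t`. -/
def Z2 (f : F3) : F3 := fun t x y => py f t x y + (y / rad x y) * pt f t x y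
/-- The family `Z = (Z₁, Z₂)`. -/
def Zi : Fin 2 → F3 → F3 := ![Z1, Z2]

/-- `f` is radially symmetric in the space variables. -/
def RadialF (f : F3) : Prop := ∀ t x y x' y', rad x y = rad x' y' → f t x y = f t x' y'

open scoped Manifold ContDiff
open Asymptotics

section Algebra

variable {R : Type*} [CommRing R] {κ : Type*}

theorem mul_list_prod_mem_span {S : Type*} [Ring S] [Algebra R S] {Γ : κ → S} {δ : S} {c : κ → R}
    (hδ : ∀ a, δ * Γ a = Γ a * δ + c a • δ) (w : List κ) :
    δ * (w.map Γ).prod ∈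
      Submodule.span R {D | ∃ v : List κ, v.length ≤ w.length ∧ D = (v.map Γ).prod * δ} := by
  induction w with
  | nil => exact Submodule.subset_span ⟨[], le_rfl, by simp⟩
  | cons a l ih =>
    have hcons : δ * ((a :: l).map Γ).prod =
        Γ a * (δ * (l.map Γ).prod) + c a • (δ * (l.map Γ).prod) := by
      rw [List.map_cons, List.prod_cons, ← mul_assoc, hδ, add_mul, mul_assoc, smul_mul_assoc]
    rw [hcons]
    refine add_mem ?_ (Submodule.smul_mem _ _ (Submodule.span_mono ?_ ih))
    · refine (Submodule.map_span_le (LinearMap.mulLeft R (Γ a)) _ _).2 ?_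
        (Submodule.mem_map_of_mem ih)
      rintro _ ⟨v, hv, rfl⟩
      exact Submodule.subset_span ⟨a :: v, by simpa using hv, by simp [mul_assoc]⟩
    · rintro _ ⟨v, hv, rfl⟩
      exact ⟨v, hv.trans (by simp), rfl⟩

variable {A : Type*}

section Product

variable [AddCommGroup A] [Module R A]

/-- The span of the operations `(u, v) ↦ B(Γ^β u, Γ^γ v)` with `|β| + |γ| ≤ m` and `|γ| < m`. -/
def lowerOrderTerms (Γ : κ → Module.End R A) (B : A → A → A) (m : ℕ) :
    Submodule R (A × A → A) :=
  Submodule.span R {D | ∃ β γ : List κ, β.length + γ.length ≤ m ∧ γ.length < m ∧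
    D = fun q => B ((β.map Γ).prod q.1) ((γ.map Γ).prod q.2)}

variable {Γ : κ → Module.End R A} {B : A → A → A} {c : κ → R}

theorem mem_lowerOrderTerms {m : ℕ} {β γ : List κ} (hβγ : β.length + γ.length ≤ m)
    (hγ : γ.length < m) :
    (fun q : A × A => B ((β.map Γ).prod q.1) ((γ.map Γ).prod q.2)) ∈ lowerOrderTerms Γ B m :=
  Submodule.subset_span ⟨β, γ, hβγ, hγ, rfl⟩

theorem comp_mem_lowerOrderTerms
    (hB : ∀ a u v, Γ a (B u v) = B (Γ a u) v + B u (Γ a v) + c a • B u v)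
    (a : κ) {m : ℕ} {D : A × A → A} (hD : D ∈ lowerOrderTerms Γ B m) :
    Γ a ∘ D ∈ lowerOrderTerms Γ B (m + 1) := by
  refine (Submodule.map_span_le ((Γ a).compLeft (A × A)) _ _).2 ?_ (Submodule.mem_map_of_mem hD)
  rintro _ ⟨β, γ, hβγ, hγ, rfl⟩
  have hleibniz : (Γ a).compLeft (A × A)
        (fun q => B ((β.map Γ).prod q.1) ((γ.map Γ).prod q.2)) =
      (fun q => B (((a :: β).map Γ).prod q.1) ((γ.map Γ).prod q.2)) +
        (fun q => B ((β.map Γ).prod q.1) (((a :: γ).map Γ).prod q.2)) +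
        c a • fun q => B ((β.map Γ).prod q.1) ((γ.map Γ).prod q.2) :=
    funext fun q => hB a _ _
  rw [hleibniz]
  exact add_mem
    (add_mem (mem_lowerOrderTerms (by grind) (by grind))
      (mem_lowerOrderTerms (by grind) (by grind)))
    (Submodule.smul_mem _ _ (mem_lowerOrderTerms (by grind) (by grind)))

-- The term in which all of `Γ^w` falls on `v` has coefficient one, so it cancels.
theorem list_prod_sub_mem_lowerOrderTerms
    (hB : ∀ a u v, Γ a (B u v) = B (Γ a u) v + B u (Γ a v) + c a • B u v) (w : List κ) :
    (fun q : A × A => (w.map Γ).prod (B q.1 q.2) - B q.1 ((w.map Γ).prod q.2)) ∈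
      lowerOrderTerms Γ B w.length := by
  induction w with
  | nil =>
    simp only [List.map_nil, List.prod_nil, Module.End.one_apply, sub_self]
    exact zero_mem _
  | cons a l ih =>
    have hcons : (fun q : A × A =>
          ((a :: l).map Γ).prod (B q.1 q.2) - B q.1 (((a :: l).map Γ).prod q.2)) =
        (Γ a ∘ fun q => (l.map Γ).prod (B q.1 q.2) - B q.1 ((l.map Γ).prod q.2)) +
          ((fun q => B (([a].map Γ).prod q.1) ((l.map Γ).prod q.2)) +
            c a • fun q => B (([].map Γ).prod q.1) ((l.map Γ).prod q.2)) := by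
      funext q
      simp only [List.map_cons, List.map_nil, List.prod_cons, List.prod_nil, mul_one,
        Module.End.mul_apply, Module.End.one_apply, Function.comp_apply, Pi.add_apply,
        Pi.smul_apply, map_sub, hB]
      abel
    rw [hcons]
    exact add_mem (comp_mem_lowerOrderTerms hB a ih)
      (add_mem (mem_lowerOrderTerms (by grind) (by grind))
        (Submodule.smul_mem _ _ (mem_lowerOrderTerms (by grind) (by grind))))

end Product

section QuasilinearForm

variable [CommRing A] [Algebra R A] {ι : Type*} [Fintype ι]

/-- The form `Q(u, v) = Σ g_i^{jk} ∂_i u ∂²_{jk} v` for a family of derivations `∂`. -/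
def quasilinearForm (g : ι → ι → ι → R) (δ : ι → Derivation R A A) (u v : A) : A :=
  ∑ i, ∑ j, ∑ k, g i j k • (δ i u * δ j (δ k v))

-- Each of the three derivatives in `Q` contributes one commutator.
theorem quasilinearForm_leibniz (g : ι → ι → ι → R) {δ : ι → Derivation R A A}
    {D : Derivation R A A} {c : R} (hD : ∀ i, ⁅δ i, D⁆ = c • δ i) (u v : A) :
    D (quasilinearForm g δ u v) =
      quasilinearForm g δ (D u) v + quasilinearForm g δ u (D v) +
        (-3 * c) • quasilinearForm g δ u v := by
  have hcomm (i : ι) (f : A) : δ i (D f) = D (δ i f) + c • δ i f := by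
    rw [← sub_eq_iff_eq_add', ← Derivation.commutator_apply, hD, Derivation.smul_apply]
  simp only [quasilinearForm, map_sum, Finset.smul_sum, ← Finset.sum_add_distrib]
  refine Finset.sum_congr rfl fun i _ => Finset.sum_congr rfl fun j _ =>
    Finset.sum_congr rfl fun k _ => ?_
  simp only [hcomm, Derivation.map_smul, Derivation.leibniz, map_add, smul_eq_mul,
    mul_add, smul_add, mul_smul_comm, smul_smul, mul_comm]
  module

end QuasilinearForm

end Algebra

section PointwiseNullCondition

variable {ι : Type*} [Fintype ι]

theorem abs_mul_add_mul_le {α β γ : ℝ} (hα : |α| ≤ 1) (hβ : |β| ≤ 1) (a s H h r : ℝ) :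
    |a * H + s * r * (α * β * γ)| ≤
      |a + α * s| * |H| + |s| * |H + β * h| + |s| * |h + γ * r| := by
  have hsplit : a * H + s * r * (α * β * γ) =
      (a + α * s) * H - α * (s * (H + β * h)) + α * β * (s * (h + γ * r)) := by ring
  rw [hsplit, ← abs_mul, ← abs_mul, ← abs_mul]
  refine (abs_add_le _ _).trans (add_le_add ((abs_sub _ _).trans (add_le_add le_rfl ?_)) ?_)
  · rw [abs_mul α]
    exact mul_le_of_le_one_left (abs_nonneg _) hα
  · rw [abs_mul (α * β), abs_mul α]
    exact mul_le_of_le_one_left (abs_nonneg _) (mul_le_one₀ hα (abs_nonneg _) hβ)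

theorem abs_sum_le_of_null {g : ι → ι → ι → ℝ} {η : ι → ℝ}
    (hη : ∑ i, ∑ j, ∑ k, g i j k * η i * η j * η k = 0) (hη_le : ∀ i, |η i| ≤ 1)
    (a : ι → ℝ) (H : ι → ι → ℝ) (s r : ℝ) (h : ι → ℝ) :
    |∑ i, ∑ j, ∑ k, g i j k * (a i * H j k)| ≤
      ∑ i, ∑ j, ∑ k, |g i j k| *
        (|a i + η i * s| * |H j k| + |s| * |H j k + η j * h k| + |s| * |h k + η k * r|) := by
  have hadd : ∑ i, ∑ j, ∑ k, g i j k * (a i * H j k) =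
      ∑ i, ∑ j, ∑ k, g i j k * (a i * H j k + s * r * (η i * η j * η k)) := by
    rw [← add_zero (∑ i, _), ← mul_zero (s * r), ← hη]
    simp only [Finset.mul_sum, ← Finset.sum_add_distrib]
    exact Finset.sum_congr rfl fun i _ => Finset.sum_congr rfl fun j _ =>
      Finset.sum_congr rfl fun k _ => by ring
  rw [hadd]
  refine (Finset.abs_sum_le_sum_abs _ _).trans (Finset.sum_le_sum fun i _ => ?_)
  refine (Finset.abs_sum_le_sum_abs _ _).trans (Finset.sum_le_sum fun j _ => ?_)
  refine (Finset.abs_sum_le_sum_abs _ _).trans (Finset.sum_le_sum fun k _ => ?_)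
  rw [abs_mul]
  gcongr
  exact abs_mul_add_mul_le (hη_le i) (hη_le j) _ _ _ _ _

end PointwiseNullCondition

section WordSums

variable {κ : Type*} [Fintype κ]

theorem le_sum_ofFn {F : List κ → ℝ} (hF : ∀ w, 0 ≤ F w) (w : List κ) :
    F w ≤ ∑ v : Fin w.length → κ, F (List.ofFn v) := by
  conv_lhs => rw [← List.ofFn_get w]
  exact Finset.single_le_sum (f := fun v : Fin w.length → κ => F (List.ofFn v))
    (fun _ _ => hF _) (Finset.mem_univ w.get)

/-- The sum of `F β ν` over all words with `|β| ≤ n`, `|ν| ≤ n` and `|β| + |ν| ≤ n + 1`. -/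
def wordPairSum (n : ℕ) (F : List κ → List κ → ℝ) : ℝ :=
  ∑ b ∈ Finset.range (n + 1), ∑ c ∈ Finset.range (n + 1),
    if b + c ≤ n + 1 then
      ∑ wb : Fin b → κ, ∑ wc : Fin c → κ, F (List.ofFn wb) (List.ofFn wc)
    else 0

theorem le_wordPairSum {n : ℕ} {F : List κ → List κ → ℝ} (hF : ∀ β ν, 0 ≤ F β ν)
    {β ν : List κ} (hβ : β.length ≤ n) (hν : ν.length ≤ n)
    (hβν : β.length + ν.length ≤ n + 1) : F β ν ≤ wordPairSum n F := by
  have hsum (b : ℕ) (ν : List κ) : 0 ≤ ∑ wb : Fin b → κ, F (List.ofFn wb) ν :=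
    Finset.sum_nonneg fun _ _ => hF _ _
  have hterm (b c : ℕ) : 0 ≤ if b + c ≤ n + 1 then
      ∑ wb : Fin b → κ, ∑ wc : Fin c → κ, F (List.ofFn wb) (List.ofFn wc) else 0 := by
    split_ifs
    · exact Finset.sum_nonneg fun _ _ => Finset.sum_nonneg fun _ _ => hF _ _
    · exact le_rfl
  calc F β ν
      ≤ ∑ wb : Fin β.length → κ, F (List.ofFn wb) ν := le_sum_ofFn (fun β => hF β ν) β
    _ ≤ ∑ wc : Fin ν.length → κ, ∑ wb : Fin β.length → κ, F (List.ofFn wb) (List.ofFn wc) :=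
        le_sum_ofFn (hsum β.length) ν
    _ = if β.length + ν.length ≤ n + 1 then
          ∑ wb : Fin β.length → κ, ∑ wc : Fin ν.length → κ, F (List.ofFn wb) (List.ofFn wc)
        else 0 := by rw [if_pos hβν, Finset.sum_comm]
    _ ≤ _ := Finset.single_le_sum (fun c _ => hterm β.length c)
        (Finset.mem_range_succ_iff.2 hν)
    _ ≤ wordPairSum n F := Finset.single_le_sum
        (fun b _ => Finset.sum_nonneg fun c _ => hterm b c) (Finset.mem_range_succ_iff.2 hβ)

theorem wordPairSum_nonneg (n : ℕ) {F : List κ → List κ → ℝ} (hF : ∀ β ν, 0 ≤ F β ν) :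
    0 ≤ wordPairSum n F :=
  (hF [] []).trans (le_wordPairSum hF n.zero_le n.zero_le (Nat.zero_le _))

end WordSums

section VectorFields

variable {E : Type*} [NormedAddCommGroup E] [NormedSpace ℝ E]

/-- The algebra of smooth real functions on a normed space. -/
abbrev SmoothFun (E : Type*) [NormedAddCommGroup E] [NormedSpace ℝ E] : Type _ :=
  C^∞⟮𝓘(ℝ, E), E; ℝ⟯

theorem contDiff_smoothFun (f : SmoothFun E) : ContDiff ℝ ∞ f :=
  f.contMDiff.contDiff

theorem differentiableAt_smoothFun (f : SmoothFun E) (p : E) : DifferentiableAt ℝ f p :=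
  (contDiff_smoothFun f).differentiable (by simp) p

/-- A smooth vector field `V`, acting on smooth functions by `f ↦ df(V)`. -/
def fieldDerivation (V : E → E) (hV : ContDiff ℝ ∞ V) :
    Derivation ℝ (SmoothFun E) (SmoothFun E) :=
  Derivation.mk'
    { toFun := fun f => ⟨fun p => fderiv ℝ f p (V p),
        (((contDiff_smoothFun f).fderiv_right le_rfl).clm_apply hV).contMDiff⟩
      map_add' := fun f h => ContMDiffMap.ext fun p => DFunLike.congr_fun
        (fderiv_add (differentiableAt_smoothFun f p) (differentiableAt_smoothFun h p)) (V p)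
      map_smul' := fun c f => ContMDiffMap.ext fun p => DFunLike.congr_fun
        (fderiv_const_smul (differentiableAt_smoothFun f p) c) (V p) }
    fun f h => ContMDiffMap.ext fun p => DFunLike.congr_fun
      (fderiv_mul (differentiableAt_smoothFun f p) (differentiableAt_smoothFun h p)) (V p)

theorem fieldDerivation_apply (V : E → E) (hV : ContDiff ℝ ∞ V) (f : SmoothFun E) (p : E) :
    fieldDerivation V hV f p = fderiv ℝ f p (V p) := rfl

theorem fieldDerivation_lie_apply {V W : E → E} (hV : ContDiff ℝ ∞ V) (hW : ContDiff ℝ ∞ W)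
    (f : SmoothFun E) (p : E) :
    ⁅fieldDerivation V hV, fieldDerivation W hW⁆ f p =
      fderiv ℝ f p (VectorField.lieBracket ℝ V W p) := by
  rw [VectorField.fderiv_apply_lieBracket (n := ∞) (contDiff_smoothFun f).contDiffAt
    (by simpa using WithTop.coe_le_coe.2 (le_top : (2 : ℕ∞) ≤ ⊤))
    (hW.differentiable (by simp) p) (hV.differentiable (by simp) p)]
  rfl

/-- The directional derivative `∂_v`. -/
def dirDeriv (v : E) : Derivation ℝ (SmoothFun E) (SmoothFun E) :=
  fieldDerivation (fun _ => v) contDiff_const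

/-- The scaling field `X`, whose value at `p` is `p`. -/
def scalingDeriv : Derivation ℝ (SmoothFun E) (SmoothFun E) :=
  fieldDerivation id contDiff_id

theorem dirDeriv_apply (v : E) (f : SmoothFun E) (p : E) : dirDeriv v f p = fderiv ℝ f p v := rfl

theorem dirDeriv_add_smul_apply (v w : E) (c : ℝ) (f : SmoothFun E) (p : E) :
    dirDeriv (v + c • w) f p = dirDeriv v f p + c * dirDeriv w f p := by
  simp [dirDeriv_apply]

theorem dirDeriv_lie_dirDeriv (v w : E) : ⁅dirDeriv v, dirDeriv w⁆ = 0 := by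
  ext f p
  simp [dirDeriv, fieldDerivation_lie_apply, VectorField.lieBracket]

theorem dirDeriv_comm (v w : E) (f : SmoothFun E) :
    dirDeriv v (dirDeriv w f) = dirDeriv w (dirDeriv v f) := by
  rw [← sub_eq_zero, ← Derivation.commutator_apply, dirDeriv_lie_dirDeriv, Derivation.zero_apply]

theorem dirDeriv_lie_scalingDeriv (v : E) : ⁅dirDeriv v, scalingDeriv⁆ = dirDeriv v := by
  ext f p
  simp [dirDeriv, scalingDeriv, fieldDerivation_lie_apply, fieldDerivation_apply,
    VectorField.lieBracket]

end VectorFields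

section CommutingFields

variable {E : Type*} [NormedAddCommGroup E] [NormedSpace ℝ E] {d : ℕ} (e : Fin (d + 1) → E)

/-- The fields `Γ = (∂_0, …, ∂_d, X)`, where `∂_i` is the derivative along `e i`. -/
def gammaField : Fin (d + 2) → Derivation ℝ (SmoothFun E) (SmoothFun E) :=
  Fin.snoc (fun i => dirDeriv (e i)) scalingDeriv

/-- The constants `κ_a` in `[∂_v, Γ_a] = κ_a ∂_v`: zero for the translations, one for `X`. -/
def gammaWeight (d : ℕ) : Fin (d + 2) → ℝ :=
  Fin.snoc (fun _ => 0) 1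

theorem dirDeriv_lie_gammaField (v : E) (a : Fin (d + 2)) :
    ⁅dirDeriv v, gammaField e a⁆ = gammaWeight d a • dirDeriv v := by
  induction a using Fin.lastCases with
  | last => simp [gammaField, gammaWeight, dirDeriv_lie_scalingDeriv]
  | cast i => simp [gammaField, gammaWeight, dirDeriv_lie_dirDeriv]

/-- The iterated composition `Γ^w` over a word `w`. -/
def gammaWord (w : List (Fin (d + 2))) : Module.End ℝ (SmoothFun E) :=
  (w.map fun a => (gammaField e a : Module.End ℝ (SmoothFun E))).prod

theorem gammaWord_cons_apply (a : Fin (d + 2)) (w : List (Fin (d + 2))) (f : SmoothFun E) :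
    gammaWord e (a :: w) f = gammaField e a (gammaWord e w f) := by
  simp [gammaWord]

theorem gammaWord_castSucc_cons_apply (i : Fin (d + 1)) (w : List (Fin (d + 2)))
    (f : SmoothFun E) :
    gammaWord e (i.castSucc :: w) f = dirDeriv (e i) (gammaWord e w f) := by
  rw [gammaWord_cons_apply, gammaField, Fin.snoc_castSucc]

theorem dirDeriv_mul_gammaWord_mem_span (v : E) (w : List (Fin (d + 2))) :
    (dirDeriv v : Module.End ℝ (SmoothFun E)) * gammaWord e w ∈
      Submodule.span ℝ {D | ∃ w' : List (Fin (d + 2)), w'.length ≤ w.length ∧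
        D = gammaWord e w' * (dirDeriv v : Module.End ℝ (SmoothFun E))} := by
  refine mul_list_prod_mem_span (c := gammaWeight d) (fun a => ?_) w
  rw [← sub_eq_iff_eq_add', ← Ring.lie_def, ← Derivation.commutator_coe_linear_map,
    dirDeriv_lie_gammaField, Derivation.coe_smul_linearMap]

theorem gammaWord_quasilinearForm_sub_mem_lowerOrderTerms
    (g : Fin (d + 1) → Fin (d + 1) → Fin (d + 1) → ℝ) (w : List (Fin (d + 2))) :
    (fun q : SmoothFun E × SmoothFun E =>
      gammaWord e w (quasilinearForm g (dirDeriv ∘ e) q.1 q.2) -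
        quasilinearForm g (dirDeriv ∘ e) q.1 (gammaWord e w q.2)) ∈
      lowerOrderTerms (fun a => (gammaField e a : Module.End ℝ (SmoothFun E)))
        (quasilinearForm g (dirDeriv ∘ e)) w.length :=
  list_prod_sub_mem_lowerOrderTerms (fun a u v =>
    quasilinearForm_leibniz g (fun i => dirDeriv_lie_gammaField e (e i) a) u v) w

end CommutingFields

section NullEstimate

variable {E : Type*} [NormedAddCommGroup E] [NormedSpace ℝ E] {d : ℕ} (e : Fin (d + 1) → E)

/-- The null condition: the cubic form with coefficients `g` vanishes on the light cone, whose time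
coordinate has index `0`. -/
def NullCondition (g : Fin (d + 1) → Fin (d + 1) → Fin (d + 1) → ℝ) : Prop :=
  ∀ η : Fin (d + 1) → ℝ, η 0 ^ 2 = ∑ i : Fin d, η i.succ ^ 2 →
    ∑ i, ∑ j, ∑ k, g i j k * η i * η j * η k = 0

/-- The covector `(-1, θ)`, which is null when `θ` is a unit vector. -/
def nullCovector (θ : Fin d → ℝ) : Fin (d + 1) → ℝ :=
  Fin.cons (-1) θ

theorem nullCovector_sq {θ : Fin d → ℝ} (hθ : ∑ i, θ i ^ 2 = 1) :
    nullCovector θ 0 ^ 2 = ∑ i : Fin d, nullCovector θ i.succ ^ 2 := by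
  simp [nullCovector, hθ]

theorem abs_nullCovector_le_one {θ : Fin d → ℝ} (hθ : ∑ i, θ i ^ 2 = 1) (i : Fin (d + 1)) :
    |nullCovector θ i| ≤ 1 := by
  induction i using Fin.cases with
  | zero => simp [nullCovector]
  | succ i =>
    rw [nullCovector, Fin.cons_succ, ← sq_le_one_iff_abs_le_one, ← hθ]
    exact Finset.single_le_sum (f := fun i => θ i ^ 2) (fun _ _ => sq_nonneg _)
      (Finset.mem_univ i)

/-- The field `Z_i = ∂_i + θ_i ∂_0` for a fixed spatial direction `θ`; the spatial index
`i : Fin d` stands for the coordinate `i.succ`. -/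
def goodDeriv (θ : Fin d → ℝ) (i : Fin d) : Derivation ℝ (SmoothFun E) (SmoothFun E) :=
  dirDeriv (e i.succ + θ i • e 0)

/-- `|Z u|` at a point. -/
def goodSup (θ : Fin d → ℝ) (u : SmoothFun E) (p : E) : ℝ :=
  ⨆ i : Fin d, |goodDeriv e θ i u p|

/-- `|Γ^ν ∂f|` at a point. -/
def gammaGradSup (ν : List (Fin (d + 2))) (f : SmoothFun E) (p : E) : ℝ :=
  ⨆ j : Fin (d + 1), |gammaWord e ν (dirDeriv (e j) f) p|

theorem goodSup_nonneg (θ : Fin d → ℝ) (u : SmoothFun E) (p : E) : 0 ≤ goodSup e θ u p :=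
  Real.iSup_nonneg fun _ => abs_nonneg _

theorem abs_dirDeriv_add_le_goodSup (θ : Fin d → ℝ) (i : Fin (d + 1)) (u : SmoothFun E) (p : E) :
    |dirDeriv (e i) u p + nullCovector θ i * dirDeriv (e 0) u p| ≤ goodSup e θ u p := by
  induction i using Fin.cases with
  | zero => simpa [nullCovector] using goodSup_nonneg e θ u p
  | succ i =>
    rw [nullCovector, Fin.cons_succ, ← dirDeriv_add_smul_apply]
    exact le_ciSup (f := fun i => |goodDeriv e θ i u p|) (Set.finite_range _).bddAbove i

theorem quasilinearForm_dirDeriv_apply (g : Fin (d + 1) → Fin (d + 1) → Fin (d + 1) → ℝ)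
    (u v : SmoothFun E) (p : E) :
    quasilinearForm g (dirDeriv ∘ e) u v p =
      ∑ i, ∑ j, ∑ k, g i j k * (dirDeriv (e i) u p * dirDeriv (e j) (dirDeriv (e k) v) p) := by
  change ContMDiffMap.evalRingHom p _ = _
  simp only [quasilinearForm, map_sum]
  rfl

theorem abs_quasilinearForm_le {g : Fin (d + 1) → Fin (d + 1) → Fin (d + 1) → ℝ}
    (hnull : NullCondition g) {θ : Fin d → ℝ} (hθ : ∑ i, θ i ^ 2 = 1) (u v : SmoothFun E) (p : E) :
    |quasilinearForm g (dirDeriv ∘ e) u v p| ≤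
      ∑ i, ∑ j, ∑ k, |g i j k| *
        (goodSup e θ u p * |dirDeriv (e j) (dirDeriv (e k) v) p| +
          goodSup e θ (dirDeriv (e k) v) p * |dirDeriv (e 0) u p| +
          goodSup e θ (dirDeriv (e 0) v) p * |dirDeriv (e 0) u p|) := by
  rw [quasilinearForm_dirDeriv_apply]
  refine (abs_sum_le_of_null (hnull _ (nullCovector_sq hθ)) (abs_nullCovector_le_one hθ)
    (fun i => dirDeriv (e i) u p) (fun j k => dirDeriv (e j) (dirDeriv (e k) v) p)
    (dirDeriv (e 0) u p) (dirDeriv (e 0) (dirDeriv (e 0) v) p)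
    (fun k => dirDeriv (e 0) (dirDeriv (e k) v) p)).trans ?_
  refine Finset.sum_le_sum fun i _ => Finset.sum_le_sum fun j _ => Finset.sum_le_sum fun k _ => ?_
  rw [mul_comm (goodSup e θ (dirDeriv (e k) v) p), mul_comm (goodSup e θ (dirDeriv (e 0) v) p)]
  gcongr
  · exact abs_dirDeriv_add_le_goodSup e θ i u p
  · exact abs_dirDeriv_add_le_goodSup e θ j _ p
  · rw [dirDeriv_comm (e 0) (e k)]
    exact abs_dirDeriv_add_le_goodSup e θ k _ p

/-- The right-hand side `Σ |ZΓ^β f| |Γ^ν ∂f|` of the commutator estimate. -/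
def commutatorMajorant (n : ℕ) (θ : Fin d → ℝ) (f : SmoothFun E) (p : E) : ℝ :=
  wordPairSum n fun β ν => goodSup e θ (gammaWord e β f) p * gammaGradSup e ν f p

theorem goodSup_mul_gammaGradSup_nonneg (θ : Fin d → ℝ) (f : SmoothFun E) (p : E)
    (β ν : List (Fin (d + 2))) :
    0 ≤ goodSup e θ (gammaWord e β f) p * gammaGradSup e ν f p :=
  mul_nonneg (goodSup_nonneg _ _ _ _) (Real.iSup_nonneg fun _ => abs_nonneg _)

theorem commutatorMajorant_nonneg (n : ℕ) (θ : Fin d → ℝ) (f : SmoothFun E) (p : E) :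
    0 ≤ commutatorMajorant e n θ f p :=
  wordPairSum_nonneg n (goodSup_mul_gammaGradSup_nonneg e θ f p)

-- `=O[⊤]` over the parameter type `Y` says that one constant serves all `f y`, `p y` and `θ y`.
variable {Y : Type*} {f : Y → SmoothFun E} {p : Y → E} {θ : Y → Fin d → ℝ}
  {n : ℕ} {β ν γ : List (Fin (d + 2))}

theorem goodSup_mul_gammaWord_isBigO (hβ : β.length ≤ n) (hν : ν.length ≤ n)
    (hβν : β.length + ν.length ≤ n + 1) (j : Fin (d + 1)) :
    (fun y => goodSup e (θ y) (gammaWord e β (f y)) (p y) *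
        gammaWord e ν (dirDeriv (e j) (f y)) (p y))
      =O[⊤] fun y => commutatorMajorant e n (θ y) (f y) (p y) := by
  refine isBigO_of_le _ fun y => ?_
  have hj : |gammaWord e ν (dirDeriv (e j) (f y)) (p y)| ≤ gammaGradSup e ν (f y) (p y) :=
    le_ciSup (f := fun j => |gammaWord e ν (dirDeriv (e j) (f y)) (p y)|)
      (Set.finite_range _).bddAbove j
  rw [Real.norm_eq_abs, abs_mul, abs_of_nonneg (goodSup_nonneg _ _ _ _)]
  calc _ ≤ goodSup e (θ y) (gammaWord e β (f y)) (p y) * gammaGradSup e ν (f y) (p y) :=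
        mul_le_mul_of_nonneg_left hj (goodSup_nonneg _ _ _ _)
    _ ≤ commutatorMajorant e n (θ y) (f y) (p y) :=
        le_wordPairSum (goodSup_mul_gammaGradSup_nonneg e (θ y) (f y) (p y)) hβ hν hβν
    _ ≤ ‖commutatorMajorant e n (θ y) (f y) (p y)‖ := Real.le_norm_self _

theorem goodSup_mul_dirDeriv_isBigO (hβ : β.length ≤ n) (hν : ν.length ≤ n)
    (hβν : β.length + ν.length ≤ n + 1) (j : Fin (d + 1)) :
    (fun y => goodSup e (θ y) (gammaWord e β (f y)) (p y) *
        dirDeriv (e j) (gammaWord e ν (f y)) (p y))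
      =O[⊤] fun y => commutatorMajorant e n (θ y) (f y) (p y) := by
  suffices h : ∀ D ∈ Submodule.span ℝ {D | ∃ v : List (Fin (d + 2)), v.length ≤ ν.length ∧
      D = gammaWord e v * (dirDeriv (e j) : Module.End ℝ (SmoothFun E))},
      (fun y => goodSup e (θ y) (gammaWord e β (f y)) (p y) * D (f y) (p y))
        =O[⊤] fun y => commutatorMajorant e n (θ y) (f y) (p y) from
    h _ (dirDeriv_mul_gammaWord_mem_span e (e j) ν)
  intro D hD
  induction hD using Submodule.span_induction with
  | mem D hD =>
    obtain ⟨v, hv, rfl⟩ := hD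
    exact goodSup_mul_gammaWord_isBigO e hβ (hv.trans hν) (by lia) j
  | zero => exact (isBigO_zero _ _).congr_left fun _ => (mul_zero _).symm
  | add D D' _ _ hD hD' => simpa [mul_add] using hD.add hD'
  | smul c D _ hD => simpa [mul_left_comm] using hD.const_mul_left c

variable {g : Fin (d + 1) → Fin (d + 1) → Fin (d + 1) → ℝ}

theorem quasilinearForm_gammaWord_isBigO (hnull : NullCondition g)
    (hθ : ∀ y, ∑ i, θ y i ^ 2 = 1) (hβγ : β.length + γ.length ≤ n) (hγ : γ.length < n) :
    (fun y => quasilinearForm g (dirDeriv ∘ e) (gammaWord e β (f y))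
        (gammaWord e γ (f y)) (p y))
      =O[⊤] fun y => commutatorMajorant e n (θ y) (f y) (p y) := by
  -- A second derivative `∂_j ∂_k Γ^γ f` is `∂_j` applied to the word `∂_k Γ^γ`, of length `≤ n`.
  have hγ' (k : Fin (d + 1)) : (k.castSucc :: γ).length ≤ n := hγ
  have hfirst (j k : Fin (d + 1)) := goodSup_mul_dirDeriv_isBigO e (f := f) (p := p) (θ := θ)
    (β := β) (by lia) (hγ' k) (by grind) j
  have hsecond (k : Fin (d + 1)) := goodSup_mul_dirDeriv_isBigO e (f := f) (p := p) (θ := θ)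
    (ν := β) (hγ' k) (by lia) (by grind) 0
  simp only [gammaWord_castSucc_cons_apply] at hfirst hsecond
  have hsum := IsBigO.fun_sum (s := Finset.univ) fun i _ =>
    IsBigO.fun_sum (s := Finset.univ) fun j _ => IsBigO.fun_sum (s := Finset.univ) fun k _ =>
      (((hfirst j k).norm_left.add (hsecond k).norm_left).add
        (hsecond 0).norm_left).const_mul_left |g i j k|
  refine (isBigO_of_le _ fun y => ?_).trans hsum
  simp only [norm_mul, Real.norm_eq_abs, abs_of_nonneg (goodSup_nonneg _ _ _ _)]
  exact (abs_quasilinearForm_le e hnull (hθ y) _ _ _).trans (le_abs_self _)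

theorem gammaWord_quasilinearForm_sub_isBigO (hnull : NullCondition g)
    (hθ : ∀ y, ∑ i, θ y i ^ 2 = 1) {w : List (Fin (d + 2))} (hw : w.length ≤ n) :
    (fun y => (gammaWord e w (quasilinearForm g (dirDeriv ∘ e) (f y) (f y)) -
        quasilinearForm g (dirDeriv ∘ e) (f y) (gammaWord e w (f y))) (p y))
      =O[⊤] fun y => commutatorMajorant e n (θ y) (f y) (p y) := by
  suffices h : ∀ D ∈ lowerOrderTerms
      (fun a => (gammaField e a : Module.End ℝ (SmoothFun E)))
      (quasilinearForm g (dirDeriv ∘ e)) w.length,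
      (fun y => D (f y, f y) (p y)) =O[⊤] fun y => commutatorMajorant e n (θ y) (f y) (p y) from
    h _ (gammaWord_quasilinearForm_sub_mem_lowerOrderTerms e g w)
  intro D hD
  induction hD using Submodule.span_induction with
  | mem D hD =>
    obtain ⟨β, γ, hβγ, hγ, rfl⟩ := hD
    exact quasilinearForm_gammaWord_isBigO e hnull hθ (hβγ.trans hw) (hγ.trans_le hw)
  | zero => exact isBigO_zero _ _
  | add D D' _ _ hD hD' => exact hD.add hD'
  | smul c D _ hD => exact hD.const_mul_left c

end NullEstimate

theorem null_form_commutator_estimate_general {E : Type*} [NormedAddCommGroup E]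
    [NormedSpace ℝ E] {d : ℕ} (e : Fin (d + 1) → E)
    {g : Fin (d + 1) → Fin (d + 1) → Fin (d + 1) → ℝ} (hnull : NullCondition g) (n : ℕ) :
    ∃ C > 0, ∀ (f : SmoothFun E) (p : E) (θ : Fin d → ℝ), ∑ i, θ i ^ 2 = 1 →
      ∑ a ∈ Finset.range (n + 1), ∑ w : Fin a → Fin (d + 2),
        |(gammaWord e (List.ofFn w) (quasilinearForm g (dirDeriv ∘ e) f f) -
          quasilinearForm g (dirDeriv ∘ e) f (gammaWord e (List.ofFn w) f)) p|
      ≤ C * commutatorMajorant e n θ f p := by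
  let Y := SmoothFun E × E × {θ : Fin d → ℝ // ∑ i, θ i ^ 2 = 1}
  have hwords : (fun y : Y => ∑ a ∈ Finset.range (n + 1), ∑ w : Fin a → Fin (d + 2),
      |(gammaWord e (List.ofFn w) (quasilinearForm g (dirDeriv ∘ e) y.1 y.1) -
        quasilinearForm g (dirDeriv ∘ e) y.1 (gammaWord e (List.ofFn w) y.1)) y.2.1|)
      =O[⊤] fun y => commutatorMajorant e n y.2.2.1 y.1 y.2.1 := by
    refine IsBigO.fun_sum fun a ha => IsBigO.fun_sum fun w _ => IsBigO.abs_left ?_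
    refine gammaWord_quasilinearForm_sub_isBigO e hnull (fun y => y.2.2.2) ?_
    simpa [Nat.lt_succ_iff] using ha
  obtain ⟨C, hC, hbound⟩ := hwords.exists_pos
  refine ⟨C, hC, fun f p θ hθ => ?_⟩
  have hnorm := isBigOWith_top.1 hbound (f, p, ⟨θ, hθ⟩)
  rw [Real.norm_of_nonneg (commutatorMajorant_nonneg e n θ f p)] at hnorm
  exact (Real.le_norm_self _).trans hnorm

section Spacetime

/-- The coordinate basis of space-time, with the time direction first. -/
def spacetimeBasis : Fin 3 → ℝ × ℝ × ℝ := ![(1, 0, 0), (0, 1, 0), (0, 0, 1)]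

/-- A smooth function on space-time as a function of the three separate variables `t`, `x`, `y`. -/
def curried (F : SmoothFun (ℝ × ℝ × ℝ)) : F3 := fun t x y => F (t, x, y)

theorem exists_curried_eq {f : F3} (hf : Smooth3 f) : ∃ F, curried F = f :=
  ⟨⟨_, hf.contMDiff⟩, rfl⟩

theorem pdi_curried (i : Fin 3) (F : SmoothFun (ℝ × ℝ × ℝ)) :
    pdi i (curried F) = curried (dirDeriv (spacetimeBasis i) F) := by
  funext t x y
  have hF := (differentiableAt_smoothFun F (t, x, y)).hasFDerivAt
  fin_cases i
  · exact (hF.comp_hasDerivAt t ((hasDerivAt_id t).prodMk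
      ((hasDerivAt_const t x).prodMk (hasDerivAt_const t y)))).deriv
  · exact (hF.comp_hasDerivAt x ((hasDerivAt_const x t).prodMk
      ((hasDerivAt_id x).prodMk (hasDerivAt_const x y)))).deriv
  · exact (hF.comp_hasDerivAt y ((hasDerivAt_const y t).prodMk
      ((hasDerivAt_const y x).prodMk (hasDerivAt_id y)))).deriv

theorem Xf_curried (F : SmoothFun (ℝ × ℝ × ℝ)) : Xf (curried F) = curried (scalingDeriv F) := by
  funext t x y
  have hcoord : ((t, x, y) : ℝ × ℝ × ℝ) =
      t • spacetimeBasis 0 + x • spacetimeBasis 1 + y • spacetimeBasis 2 := by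
    simp [spacetimeBasis]
  calc Xf (curried F) t x y
      = t * pdi 0 (curried F) t x y + x * pdi 1 (curried F) t x y +
          y * pdi 2 (curried F) t x y := rfl
    _ = fderiv ℝ F (t, x, y)
          (t • spacetimeBasis 0 + x • spacetimeBasis 1 + y • spacetimeBasis 2) := by
        simp only [pdi_curried, map_add, map_smul, smul_eq_mul, curried, dirDeriv_apply]
    _ = curried (scalingDeriv F) t x y := by rw [← hcoord]; rfl

theorem GammaF_curried (a : Fin 4) (F : SmoothFun (ℝ × ℝ × ℝ)) :
    GammaF a (curried F) = curried (gammaField spacetimeBasis a F) := by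
  fin_cases a
  · exact pdi_curried 0 F
  · exact pdi_curried 1 F
  · exact pdi_curried 2 F
  · exact Xf_curried F

theorem GIter_curried (w : List (Fin 4)) (F : SmoothFun (ℝ × ℝ × ℝ)) :
    GIter w (curried F) = curried (gammaWord spacetimeBasis w F) := by
  induction w with
  | nil => rfl
  | cons a w ih => rw [GIter, ih, GammaF_curried, gammaWord_cons_apply]

theorem Zi_curried (i : Fin 2) (F : SmoothFun (ℝ × ℝ × ℝ)) (t x y : ℝ) :
    Zi i (curried F) t x y =
      goodDeriv spacetimeBasis ![x / rad x y, y / rad x y] i F (t, x, y) := by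
  rw [goodDeriv, dirDeriv_add_smul_apply]
  fin_cases i
  · change pdi 1 (curried F) t x y + x / rad x y * pdi 0 (curried F) t x y = _
    rw [pdi_curried, pdi_curried]
    rfl
  · change pdi 2 (curried F) t x y + y / rad x y * pdi 0 (curried F) t x y = _
    rw [pdi_curried, pdi_curried]
    rfl

theorem sum_pdi_curried (g : Fin 3 → Fin 3 → Fin 3 → ℝ) (F G : SmoothFun (ℝ × ℝ × ℝ))
    (t x y : ℝ) :
    ∑ i, ∑ j, ∑ k, g i j k * pdi i (curried F) t x y * pdi j (pdi k (curried G)) t x y =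
      curried (quasilinearForm g (dirDeriv ∘ spacetimeBasis) F G) t x y := by
  simp only [pdi_curried, mul_assoc, curried, quasilinearForm_dirDeriv_apply]

theorem sum_sq_direction_eq_one {x y : ℝ} (hxy : (x, y) ≠ (0, 0)) :
    ∑ i, ![x / rad x y, y / rad x y] i ^ 2 = 1 := by
  have hne : x ^ 2 + y ^ 2 ≠ 0 := by
    simpa [add_eq_zero_iff_of_nonneg, sq_nonneg] using hxy
  have hrad : rad x y ^ 2 = x ^ 2 + y ^ 2 := Real.sq_sqrt (by positivity)
  simp [div_pow, hrad, ← add_div, hne]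

end Spacetime

/-- **Commutator estimate for the first null form** (Lemma 3.1, (3.4)). -/
theorem null_form_commutator_estimate (g : Fin 3 → Fin 3 → Fin 3 → ℝ)
    (hsym : ∀ i j k, g i j k = g i k j)
    (hnull : ∀ p : Fin 3 → ℝ, (p 0) ^ 2 = (p 1) ^ 2 + (p 2) ^ 2 →
      ∑ i, ∑ j, ∑ k, g i j k * p i * p j * p k = 0) :
    ∀ n : ℕ, ∃ C > 0, ∀ T : ℝ, 0 < T → ∀ f : F3, Smooth3 f →
      ∀ t x y : ℝ, t ∈ Icc (0 : ℝ) T → (x, y) ≠ ((0 : ℝ), (0 : ℝ)) →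
        (∑ a ∈ Finset.range (n + 1), ∑ w : Fin a → Fin 4,
          |GIter (List.ofFn w)
              (fun s u v => ∑ i, ∑ j, ∑ k, g i j k * pdi i f s u v * pdi j (pdi k f) s u v)
              t x y
            - ∑ i, ∑ j, ∑ k,
                g i j k * pdi i f t x y * pdi j (pdi k (GIter (List.ofFn w) f)) t x y|)
        ≤ C * ∑ b ∈ Finset.range (n + 1), ∑ c ∈ Finset.range (n + 1),
            (if b + c ≤ n + 1 then
              ∑ wb : Fin b → Fin 4, ∑ wc : Fin c → Fin 4,
                (⨆ i : Fin 2, |Zi i (GIter (List.ofFn wb) f) t x y|) *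
                (⨆ j : Fin 3, |GIter (List.ofFn wc) (pdi j f) t x y|)
            else 0) := by
  intro n
  have hcone : NullCondition (d := 2) g := fun p hp => hnull p (by simpa using hp)
  obtain ⟨C, hC, hbound⟩ := null_form_commutator_estimate_general spacetimeBasis hcone n
  refine ⟨C, hC, fun T _ f hf t x y _ hxy => ?_⟩
  obtain ⟨F, rfl⟩ := exists_curried_eq hf
  simp only [GIter_curried, sum_pdi_curried]
  simp only [GIter_curried, pdi_curried, Zi_curried]
  exact hbound F (t, x, y) _ (sum_sq_direction_eq_one hxy)

end
end

section
/- Fix M > 0. There exists a constant C > 0, independent of t, such that for every f ∈ C¹([0,∞)×ℝ²) with supp f(t,·) ⊂ {x : |x| ≤ M + t} for each t, and every t ≥ 0: ‖σ₋(t,·)^{−1} f(t,·)‖_{L²({|x| ≥ M+1})} ≤ C ‖∇_x f(t,·)‖_{L²({|x| ≥ M+1})}. -/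
/-!
Along a ray, with `s = R + δ - r` and a nonnegative nondecreasing weight `w`,

  `4 w u'² + 2 (w u² / s)' - w u² / s² = w (2 u' + u / s)² + 2 w' u² / s ≥ 0`,

so for `u R = 0` integration over `[a, R]` gives `∫ w u² / s² ≤ 4 ∫ w u'²`, the boundary term at `a`
having the favourable sign. Polar coordinates, where `w r = r ^ (n - 1)`, turn this into a Hardy
inequality on `{|x| ≥ a}` for functions vanishing on `{|x| ≥ R}`. For `R = M + t` and `δ = 1` its
weight is comparable to `σ₋`, because `1 + |M + t - |x|| ≤ (1 + |M|) (1 + |t - |x||)`.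
-/

noncomputable section

open Real MeasureTheory Set

/-- The `L²(ℝ²)` norm. -/
def L2n (g : ℝ → ℝ → ℝ) : ℝ := Real.sqrt (∫ q : ℝ × ℝ, (g q.1 q.2) ^ 2)

/-- The `L²` norm over a region `S ⊆ ℝ²`. -/
def L2nS (S : Set (ℝ × ℝ)) (g : ℝ → ℝ → ℝ) : ℝ := Real.sqrt (∫ q in S, (g q.1 q.2) ^ 2)

/-- The exterior region `{x : |x| ≥ M + 1}`. -/
def regOut (M : ℝ) : Set (ℝ × ℝ) := {q | M + 1 ≤ rad q.1 q.2}

section HalfLine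

variable {w w' u u' : ℝ → ℝ} {a R : ℝ}

theorem hasDerivAt_mul_sq_div_const_sub {b w₀ u₀ r : ℝ} (hw : HasDerivAt w w₀ r)
    (hu : HasDerivAt u u₀ r) (hr : r < b) :
    HasDerivAt (fun r => w r * u r ^ 2 / (b - r))
      (w₀ * u r ^ 2 / (b - r) + 2 * w r * u r * u₀ / (b - r) + w r * (u r / (b - r)) ^ 2) r := by
  have hs : b - r ≠ 0 := (sub_pos.2 hr).ne'
  have hs' : HasDerivAt (fun r => b - r) (-1) r := (hasDerivAt_id r).const_sub b
  refine ((hw.mul (hu.pow 2)).div hs' hs).congr_deriv ?_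
  simp only [Pi.mul_apply, Pi.pow_apply]
  field_simp
  ring

theorem mul_div_sq_le_four_mul_add {w w' u u' s : ℝ} (hw : 0 ≤ w) (hw' : 0 ≤ w') (hs : 0 < s) :
    w * (u / s) ^ 2 ≤ 4 * (w * u' ^ 2)
      + 2 * (w' * u ^ 2 / s + 2 * w * u * u' / s + w * (u / s) ^ 2) := by
  rw [← sub_nonneg]
  calc 0 ≤ w * (2 * u' + u / s) ^ 2 + 2 * (w' * u ^ 2 / s) := by positivity
    _ = _ := by ring

theorem hardy_intervalIntegral {b : ℝ} (haR : a ≤ R) (hRb : R < b)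
    (hw : ∀ r ∈ Icc a R, HasDerivAt w (w' r) r) (hw'c : ContinuousOn w' (Icc a R))
    (hw0 : ∀ r ∈ Icc a R, 0 ≤ w r) (hw'0 : ∀ r ∈ Icc a R, 0 ≤ w' r)
    (hu : ∀ r ∈ Icc a R, HasDerivAt u (u' r) r) (hu'c : ContinuousOn u' (Icc a R))
    (huR : u R = 0) :
    ∫ r in a..R, w r * (u r / (b - r)) ^ 2 ≤ 4 * ∫ r in a..R, w r * u' r ^ 2 := by
  have hs : ∀ r ∈ Icc a R, 0 < b - r := fun r hr => by linarith [hr.2]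
  have hs0 : ∀ r ∈ Icc a R, b - r ≠ 0 := fun r hr => (hs r hr).ne'
  have hwc : ContinuousOn w (Icc a R) := fun r hr => (hw r hr).continuousAt.continuousWithinAt
  have huc : ContinuousOn u (Icc a R) := fun r hr => (hu r hr).continuousAt.continuousWithinAt
  have hint {v : ℝ → ℝ} (hv : ContinuousOn v (Icc a R)) : IntervalIntegrable v volume a R :=
    hv.intervalIntegrable_of_Icc haR
  set Φ : ℝ → ℝ := fun r => w r * u r ^ 2 / (b - r)
  set Φ' : ℝ → ℝ := fun r =>
    w' r * u r ^ 2 / (b - r) + 2 * w r * u r * u' r / (b - r) + w r * (u r / (b - r)) ^ 2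
  have hΦ : ∀ r ∈ uIcc a R, HasDerivAt Φ (Φ' r) r := by
    rw [uIcc_of_le haR]
    exact fun r hr => hasDerivAt_mul_sq_div_const_sub (hw r hr) (hu r hr) (hr.2.trans_lt hRb)
  have hΦ' : IntervalIntegrable Φ' volume a R := hint (by fun_prop (disch := assumption))
  have hL : IntervalIntegrable (fun r => w r * (u r / (b - r)) ^ 2) volume a R :=
    hint (by fun_prop (disch := assumption))
  have hD : IntervalIntegrable (fun r => w r * u' r ^ 2) volume a R := hint (by fun_prop)
  have hΦR : Φ R = 0 := by simp [Φ, huR]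
  have hΦa : 0 ≤ Φ a :=
    have haI : a ∈ Icc a R := left_mem_Icc.2 haR
    div_nonneg (mul_nonneg (hw0 a haI) (sq_nonneg _)) (hs a haI).le
  calc ∫ r in a..R, w r * (u r / (b - r)) ^ 2
      ≤ ∫ r in a..R, (4 * (w r * u' r ^ 2) + 2 * Φ' r) :=
        intervalIntegral.integral_mono_on haR hL ((hD.const_mul 4).add (hΦ'.const_mul 2))
          fun r hr => mul_div_sq_le_four_mul_add (hw0 r hr) (hw'0 r hr) (hs r hr)
    _ = 4 * (∫ r in a..R, w r * u' r ^ 2) + 2 * (Φ R - Φ a) := by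
        rw [intervalIntegral.integral_add (hD.const_mul 4) (hΦ'.const_mul 2),
          intervalIntegral.integral_const_mul, intervalIntegral.integral_const_mul,
          intervalIntegral.integral_eq_sub_of_hasDerivAt hΦ hΦ']
    _ ≤ 4 * ∫ r in a..R, w r * u' r ^ 2 := by linarith

theorem setIntegral_Ioi_eq_intervalIntegral {v : ℝ → ℝ} (haR : a ≤ R)
    (hv : ∀ r, R < r → v r = 0) : ∫ r in Ioi a, v r = ∫ r in a..R, v r := by
  rw [intervalIntegral.integral_of_le haR]
  refine setIntegral_eq_of_subset_of_forall_sdiff_eq_zero measurableSet_Ioi Ioc_subset_Ioi_self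
    fun r hr => hv r ?_
  by_contra! h
  exact hr.2 ⟨hr.1, h⟩

theorem hardy_integral_Ioi {δ : ℝ} (hδ : 0 < δ)
    (hw : ∀ r ∈ Ici a, HasDerivAt w (w' r) r) (hw'c : ContinuousOn w' (Ici a))
    (hw0 : ∀ r ∈ Ici a, 0 ≤ w r) (hw'0 : ∀ r ∈ Ici a, 0 ≤ w' r)
    (hu : ∀ r ∈ Ici a, HasDerivAt u (u' r) r) (hu'c : ContinuousOn u' (Ici a))
    (hu0 : ∀ r, R ≤ r → u r = 0) :
    ∫ r in Ioi a, w r * (u r / (δ + |R - r|)) ^ 2 ≤ 4 * ∫ r in Ioi a, w r * u' r ^ 2 := by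
  rcases le_total R a with hRa | haR
  · have hleft : ∫ r in Ioi a, w r * (u r / (δ + |R - r|)) ^ 2 = 0 :=
      setIntegral_eq_zero_of_forall_eq_zero fun r hr => by simp [hu0 r (hRa.trans (le_of_lt hr))]
    have hright : 0 ≤ ∫ r in Ioi a, w r * u' r ^ 2 :=
      setIntegral_nonneg measurableSet_Ioi fun r hr =>
        mul_nonneg (hw0 r (Ioi_subset_Ici_self hr)) (sq_nonneg _)
    linarith
  have hu'0 : ∀ r, R < r → u' r = 0 := fun r hr =>
    (hu r (haR.trans hr.le)).unique <| (hasDerivAt_const r 0).congr_of_eventuallyEq <| by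
      filter_upwards [lt_mem_nhds hr] with s hs using hu0 s hs.le
  rw [setIntegral_Ioi_eq_intervalIntegral haR fun r hr => by simp [hu0 r hr.le],
    setIntegral_Ioi_eq_intervalIntegral haR fun r hr => by simp [hu'0 r hr]]
  have hweight : ∫ r in a..R, w r * (u r / (δ + |R - r|)) ^ 2
      = ∫ r in a..R, w r * (u r / (R + δ - r)) ^ 2 := by
    refine intervalIntegral.integral_congr fun r hr => ?_
    rw [uIcc_of_le haR] at hr
    rw [abs_of_nonneg (sub_nonneg.2 hr.2), add_comm R, add_sub_assoc]
  rw [hweight]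
  have hsub : Icc a R ⊆ Ici a := Icc_subset_Ici_self
  exact hardy_intervalIntegral haR (by linarith) (fun r hr => hw r (hsub hr)) (hw'c.mono hsub)
    (fun r hr => hw0 r (hsub hr)) (fun r hr => hw'0 r (hsub hr)) (fun r hr => hu r (hsub hr))
    (hu'c.mono hsub) (hu0 R le_rfl)

end HalfLine

section PolarCoordinates

open Metric Module

variable {V : Type*} [NormedAddCommGroup V]

theorem integral_volumeIoiPow [NormedSpace ℝ V] (k : ℕ) (v : ℝ → V) :
    ∫ r : Ioi (0 : ℝ), v r ∂(.volumeIoiPow k) = ∫ r in Ioi 0, r ^ k • v r := by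
  simp only [Measure.volumeIoiPow, ENNReal.ofReal]
  rw [integral_withDensity_eq_integral_smul (by fun_prop),
    integral_subtype_comap measurableSet_Ioi fun r : ℝ => (r ^ k).toNNReal • v r]
  refine setIntegral_congr_fun measurableSet_Ioi fun r hr => ?_
  simp [NNReal.smul_def, (le_of_lt hr : (0 : ℝ) ≤ r)]

variable {E : Type*} [NormedAddCommGroup E] [NormedSpace ℝ E] {F : E → V} {a : ℝ}

theorem integral_volumeIoiPow_indicator_exterior [NormedSpace ℝ V] (ha : 0 ≤ a) (k : ℕ) {ω : E}
    (hω : ‖ω‖ = 1) :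
    ∫ r : Ioi (0 : ℝ), {x : E | a ≤ ‖x‖}.indicator F ((r : ℝ) • ω) ∂(.volumeIoiPow k)
      = ∫ r in Ioi a, r ^ k • F (r • ω) := by
  rw [integral_volumeIoiPow k fun r => {x : E | a ≤ ‖x‖}.indicator F (r • ω)]
  calc ∫ r in Ioi 0, r ^ k • {x : E | a ≤ ‖x‖}.indicator F (r • ω)
      = ∫ r in Ioi 0, (Ici a).indicator (fun r => r ^ k • F (r • ω)) r :=
        setIntegral_congr_fun measurableSet_Ioi fun r (hr : 0 < r) => by
          simp [indicator_apply, norm_smul, hω, abs_of_pos hr]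
    _ = ∫ r in Ioi 0 ∩ Ici a, r ^ k • F (r • ω) := setIntegral_indicator measurableSet_Ici
    _ = ∫ r in Ioi 0 ∩ Ioi a, r ^ k • F (r • ω) :=
        setIntegral_congr_set ((ae_eq_refl _).inter Ioi_ae_eq_Ici.symm)
    _ = ∫ r in Ioi a, r ^ k • F (r • ω) := by rw [Ioi_inter_Ioi, sup_eq_right.2 ha]

variable [FiniteDimensional ℝ E] [MeasurableSpace E] [BorelSpace E]
  {μ : Measure E} [μ.IsAddHaarMeasure]

theorem integrable_comp_smul_sphere (hF : Integrable F μ) :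
    Integrable (fun p : sphere (0 : E) 1 × Ioi (0 : ℝ) => F ((p.2 : ℝ) • (p.1 : E)))
      (μ.toSphere.prod (.volumeIoiPow (finrank ℝ E - 1))) := by
  rw [← μ.measurePreserving_homeomorphUnitSphereProd.integrable_comp_emb
    (Homeomorph.measurableEmbedding _)]
  have hF' := (integrableOn_iff_comap_subtypeVal (measurableSet_singleton (0 : E)).compl).1
    hF.integrableOn
  refine hF'.congr (.of_forall fun x => ?_)
  simp [smul_smul, norm_ne_zero_iff.2 x.2]

variable [Nontrivial E]

theorem integral_eq_integral_toSphere [NormedSpace ℝ V] (hF : Integrable F μ) :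
    ∫ x, F x ∂μ = ∫ ω : sphere (0 : E) 1, ∫ r : Ioi (0 : ℝ), F ((r : ℝ) • (ω : E))
      ∂(.volumeIoiPow (finrank ℝ E - 1)) ∂μ.toSphere := by
  calc ∫ x, F x ∂μ = ∫ x : ({0}ᶜ : Set E), F x ∂(μ.comap (↑)) := by
        rw [integral_subtype_comap (measurableSet_singleton _).compl, restrict_compl_singleton]
    _ = ∫ p, F ((p.2 : ℝ) • (p.1 : E)) ∂(μ.toSphere.prod (.volumeIoiPow (finrank ℝ E - 1))) := by
        rw [← μ.measurePreserving_homeomorphUnitSphereProd.integral_comp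
          (Homeomorph.measurableEmbedding _)]
        refine integral_congr_ae (.of_forall fun x => ?_)
        simp [smul_smul, norm_ne_zero_iff.2 x.2]
    _ = _ := integral_prod _ (integrable_comp_smul_sphere hF)

theorem integral_exterior_mono_of_rays {F G : E → ℝ} (ha : 0 ≤ a) (hF : Integrable F μ)
    (hG : Integrable G μ)
    (hray : ∀ ω : E, ‖ω‖ = 1 → ∫ r in Ioi a, r ^ (finrank ℝ E - 1) * F (r • ω)
      ≤ ∫ r in Ioi a, r ^ (finrank ℝ E - 1) * G (r • ω)) :
    ∫ x in {x | a ≤ ‖x‖}, F x ∂μ ≤ ∫ x in {x | a ≤ ‖x‖}, G x ∂μ := by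
  have hS : MeasurableSet {x : E | a ≤ ‖x‖} := measurableSet_le measurable_const measurable_norm
  have hF' := hF.indicator hS
  have hG' := hG.indicator hS
  rw [← integral_indicator hS, ← integral_indicator hS, integral_eq_integral_toSphere hF',
    integral_eq_integral_toSphere hG']
  refine integral_mono (integrable_comp_smul_sphere hF').integral_prod_left
    (integrable_comp_smul_sphere hG').integral_prod_left fun ω => ?_
  have hω : ‖(ω : E)‖ = 1 := norm_eq_of_mem_sphere ω
  simpa only [integral_volumeIoiPow_indicator_exterior ha _ hω, smul_eq_mul] using hray ω hω

end PolarCoordinates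

section CompactSupport

variable {E : Type*} [NormedAddCommGroup E] {g : E → ℝ}

theorem hasCompactSupport_of_forall_le_norm [ProperSpace E] {R : ℝ}
    (hg0 : ∀ x, R ≤ ‖x‖ → g x = 0) : HasCompactSupport g :=
  .intro (isCompact_closedBall (0 : E) R) fun x hx =>
    hg0 x (not_le.1 (mt mem_closedBall_zero_iff.2 hx)).le

theorem hasCompactSupport_sq_norm_fderiv [NormedSpace ℝ E] (hgs : HasCompactSupport g) :
    HasCompactSupport fun x => ‖fderiv ℝ g x‖ ^ 2 :=
  (hgs.fderiv ℝ).comp_left (g := fun L => ‖L‖ ^ 2) (by simp)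

theorem integrable_pow_mul_sq_norm_fderiv_smul [NormedSpace ℝ E] (hg : ContDiff ℝ 1 g)
    (hgs : HasCompactSupport g) (k : ℕ) {ω : E} (hω : ω ≠ 0) :
    Integrable fun r : ℝ => r ^ k * ‖fderiv ℝ g (r • ω)‖ ^ 2 := by
  have : Continuous (fderiv ℝ g) := hg.continuous_fderiv one_ne_zero
  have hsupp := (hasCompactSupport_sq_norm_fderiv hgs).comp_isClosedEmbedding
    (isClosedEmbedding_smul_left (𝕜 := ℝ) hω)
  exact Continuous.integrable_of_hasCompactSupport (by fun_prop) hsupp.mul_left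

variable [MeasurableSpace E] [OpensMeasurableSpace E] {μ : Measure E}
  [IsFiniteMeasureOnCompacts μ]

theorem integrable_div_add_abs_sub_norm_sq (hg : Continuous g) (hgs : HasCompactSupport g)
    {δ : ℝ} (hδ : 0 < δ) (R : ℝ) : Integrable (fun x => (g x / (δ + |R - ‖x‖|)) ^ 2) μ := by
  have hs (x : E) : δ + |R - ‖x‖| ≠ 0 := by positivity
  refine Continuous.integrable_of_hasCompactSupport (by fun_prop (disch := exact hs)) ?_
  exact hgs.mono fun x hx hgx => hx (by simp [hgx])

theorem integrable_sq_norm_fderiv [NormedSpace ℝ E] (hg : ContDiff ℝ 1 g)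
    (hgs : HasCompactSupport g) : Integrable (fun x => ‖fderiv ℝ g x‖ ^ 2) μ :=
  ((hg.continuous_fderiv one_ne_zero).norm.pow 2).integrable_of_hasCompactSupport
    (hasCompactSupport_sq_norm_fderiv hgs)

end CompactSupport

section Exterior

open Module

variable {E : Type*} [NormedAddCommGroup E] [NormedSpace ℝ E] {g : E → ℝ} {a δ R : ℝ}

theorem hardy_integral_Ioi_smul (hg : ContDiff ℝ 1 g) (hgs : HasCompactSupport g)
    (hg0 : ∀ x, R ≤ ‖x‖ → g x = 0) (ha : 0 ≤ a) (hδ : 0 < δ) (k : ℕ) {ω : E} (hω : ‖ω‖ = 1) :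
    ∫ r in Ioi a, r ^ k * (g (r • ω) / (δ + |R - ‖r • ω‖|)) ^ 2
      ≤ 4 * ∫ r in Ioi a, r ^ k * ‖fderiv ℝ g (r • ω)‖ ^ 2 := by
  have hnorm (r : ℝ) : ‖r • ω‖ = |r| := by rw [norm_smul, hω, mul_one, norm_eq_abs]
  have hpos {r : ℝ} (hr : r ∈ Ioi a) : 0 < r := ha.trans_lt hr
  have : Continuous (fderiv ℝ g) := hg.continuous_fderiv one_ne_zero
  have hu (r : ℝ) : HasDerivAt (fun r => g (r • ω)) (fderiv ℝ g (r • ω) ω) r :=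
    (hg.differentiable one_ne_zero _).hasFDerivAt.comp_hasDerivAt r
      (by simpa using (hasDerivAt_id r).smul_const ω)
  have hradial (r : ℝ) : fderiv ℝ g (r • ω) ω ^ 2 ≤ ‖fderiv ℝ g (r • ω)‖ ^ 2 := by
    rw [← sq_abs, ← norm_eq_abs]
    gcongr
    simpa [hω] using (fderiv ℝ g (r • ω)).le_opNorm ω
  calc ∫ r in Ioi a, r ^ k * (g (r • ω) / (δ + |R - ‖r • ω‖|)) ^ 2
      = ∫ r in Ioi a, r ^ k * (g (r • ω) / (δ + |R - r|)) ^ 2 :=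
        setIntegral_congr_fun measurableSet_Ioi fun r hr => by
          simp only [hnorm, abs_of_pos (hpos hr)]
    _ ≤ 4 * ∫ r in Ioi a, r ^ k * fderiv ℝ g (r • ω) ω ^ 2 :=
        hardy_integral_Ioi hδ (fun r _ => hasDerivAt_pow k r) (by fun_prop)
          (fun r hr => pow_nonneg (ha.trans hr) k)
          (fun r hr => mul_nonneg k.cast_nonneg (pow_nonneg (ha.trans hr) _)) (fun r _ => hu r)
          (by fun_prop) fun r hr => hg0 _ (hr.trans ((le_abs_self r).trans_eq (hnorm r).symm))
    _ ≤ 4 * ∫ r in Ioi a, r ^ k * ‖fderiv ℝ g (r • ω)‖ ^ 2 := by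
        have hω0 : ω ≠ 0 := norm_ne_zero_iff.1 (hω ▸ one_ne_zero)
        gcongr 4 * ?_
        refine integral_mono_of_nonneg ?_
          (integrable_pow_mul_sq_norm_fderiv_smul hg hgs k hω0).integrableOn ?_ <;>
        filter_upwards [ae_restrict_mem measurableSet_Ioi] with r hr
        · exact mul_nonneg (pow_nonneg (hpos hr).le k) (sq_nonneg _)
        · exact mul_le_mul_of_nonneg_left (hradial r) (pow_nonneg (hpos hr).le k)

variable [FiniteDimensional ℝ E] [Nontrivial E] [MeasurableSpace E] [BorelSpace E]
  {μ : Measure E} [μ.IsAddHaarMeasure]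

theorem hardy_integral_exterior (hg : ContDiff ℝ 1 g) (hg0 : ∀ x, R ≤ ‖x‖ → g x = 0)
    (ha : 0 ≤ a) (hδ : 0 < δ) :
    ∫ x in {x | a ≤ ‖x‖}, (g x / (δ + |R - ‖x‖|)) ^ 2 ∂μ
      ≤ 4 * ∫ x in {x | a ≤ ‖x‖}, ‖fderiv ℝ g x‖ ^ 2 ∂μ := by
  have hgs := hasCompactSupport_of_forall_le_norm hg0
  rw [← integral_const_mul]
  refine integral_exterior_mono_of_rays ha
    (integrable_div_add_abs_sub_norm_sq hg.continuous hgs hδ R)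
    ((integrable_sq_norm_fderiv hg hgs).const_mul 4) fun ω hω => ?_
  simpa only [mul_left_comm _ (4 : ℝ), integral_const_mul] using
    hardy_integral_Ioi_smul hg hgs hg0 ha hδ (finrank ℝ E - 1) hω

theorem one_add_abs_add_sub_le (M s r : ℝ) :
    1 + |M + s - r| ≤ (1 + |M|) * (1 + |s - r|) := by
  have htri : |M + s - r| ≤ |M| + |s - r| := by
    rw [add_sub_assoc]
    exact abs_add_le M (s - r)
  nlinarith [mul_nonneg (abs_nonneg M) (abs_nonneg (s - r))]

theorem weighted_hardy_exterior_general {M t : ℝ} (hg : ContDiff ℝ 1 g)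
    (hg0 : ∀ x, M + t ≤ ‖x‖ → g x = 0) (ha : 0 ≤ a) :
    √(∫ x in {x | a ≤ ‖x‖}, (g x / (1 + |t - ‖x‖|)) ^ 2 ∂μ)
      ≤ 2 * (1 + |M|) * √(∫ x in {x | a ≤ ‖x‖}, ‖fderiv ℝ g x‖ ^ 2 ∂μ) := by
  have hint := integrable_div_add_abs_sub_norm_sq (μ := μ) hg.continuous
    (hasCompactSupport_of_forall_le_norm hg0) one_pos (M + t)
  have hweight (x : E) : (g x / (1 + |t - ‖x‖|)) ^ 2
      ≤ (1 + |M|) ^ 2 * (g x / (1 + |M + t - ‖x‖|)) ^ 2 := by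
    rw [div_pow, div_pow, ← mul_div_assoc, div_le_div_iff₀ (by positivity) (by positivity)]
    calc g x ^ 2 * (1 + |M + t - ‖x‖|) ^ 2
        ≤ g x ^ 2 * ((1 + |M|) * (1 + |t - ‖x‖|)) ^ 2 := by
          gcongr
          exact one_add_abs_add_sub_le M t ‖x‖
      _ = (1 + |M|) ^ 2 * g x ^ 2 * (1 + |t - ‖x‖|) ^ 2 := by ring
  refine sqrt_le_iff.2 ⟨by positivity, ?_⟩
  rw [mul_pow, sq_sqrt (by positivity)]
  calc ∫ x in {x | a ≤ ‖x‖}, (g x / (1 + |t - ‖x‖|)) ^ 2 ∂μ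
      ≤ ∫ x in {x | a ≤ ‖x‖}, (1 + |M|) ^ 2 * (g x / (1 + |M + t - ‖x‖|)) ^ 2 ∂μ :=
        integral_mono_of_nonneg (.of_forall fun x => by positivity)
          (hint.const_mul _).integrableOn (.of_forall hweight)
    _ = (1 + |M|) ^ 2 * ∫ x in {x | a ≤ ‖x‖}, (g x / (1 + |M + t - ‖x‖|)) ^ 2 ∂μ :=
        integral_const_mul _ _
    _ ≤ (1 + |M|) ^ 2 * (4 * ∫ x in {x | a ≤ ‖x‖}, ‖fderiv ℝ g x‖ ^ 2 ∂μ) := by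
        gcongr
        exact hardy_integral_exterior hg hg0 ha one_pos
    _ = (2 * (1 + |M|)) ^ 2 * ∫ x in {x | a ≤ ‖x‖}, ‖fderiv ℝ g x‖ ^ 2 ∂μ := by ring

end Exterior

section ComplexPlane

theorem rad_re_im (z : ℂ) : rad z.re z.im = ‖z‖ := (Complex.norm_eq_sqrt_sq_add_sq z).symm

theorem L2nS_regOut_eq (M : ℝ) (h : ℝ → ℝ → ℝ) :
    L2nS (regOut M) h = √(∫ z in {z : ℂ | M + 1 ≤ ‖z‖}, h z.re z.im ^ 2) := by
  rw [L2nS, ← Complex.volume_preserving_equiv_real_prod.setIntegral_preimage_emb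
    Complex.measurableEquivRealProd.measurableEmbedding]
  simp only [regOut, preimage_ofPred_eq, Complex.measurableEquivRealProd_apply, rad_re_im]

theorem sq_norm_eq_sq_apply_one_add_sq_apply_I (L : ℂ →L[ℝ] ℝ) :
    ‖L‖ ^ 2 = L 1 ^ 2 + L Complex.I ^ 2 := by
  rw [← (InnerProductSpace.toDual ℝ ℂ).symm.norm_map L,
    ← Complex.orthonormalBasisOneI.sum_sq_norm_inner_left]
  simp

variable {f : F3} {t : ℝ} {z : ℂ}

theorem px_re_im (hf : DifferentiableAt ℝ (fun w : ℂ => f t w.re w.im) z) :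
    px f t z.re z.im = fderiv ℝ (fun w : ℂ => f t w.re w.im) z 1 := by
  have hline : HasDerivAt (fun s : ℝ => (⟨s, z.im⟩ : ℂ)) 1 z.re :=
    Complex.equivRealProdCLM.symm.hasFDerivAt.comp_hasDerivAt z.re
      ((hasDerivAt_id z.re).prodMk (hasDerivAt_const z.re z.im))
  exact (hf.hasFDerivAt.comp_hasDerivAt z.re hline).deriv

theorem py_re_im (hf : DifferentiableAt ℝ (fun w : ℂ => f t w.re w.im) z) :
    py f t z.re z.im = fderiv ℝ (fun w : ℂ => f t w.re w.im) z Complex.I := by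
  have hline : HasDerivAt (fun s : ℝ => (⟨z.re, s⟩ : ℂ)) Complex.I z.im :=
    Complex.equivRealProdCLM.symm.hasFDerivAt.comp_hasDerivAt z.im
      ((hasDerivAt_const z.im z.re).prodMk (hasDerivAt_id z.im))
  exact (hf.hasFDerivAt.comp_hasDerivAt z.im hline).deriv

theorem sqrt_px_sq_add_py_sq_eq_norm_fderiv
    (hf : DifferentiableAt ℝ (fun w : ℂ => f t w.re w.im) z) :
    √(px f t z.re z.im ^ 2 + py f t z.re z.im ^ 2) = ‖fderiv ℝ (fun w : ℂ => f t w.re w.im) z‖ := by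
  rw [px_re_im hf, py_re_im hf, ← sq_norm_eq_sq_apply_one_add_sq_apply_I, sqrt_sq (norm_nonneg _)]

end ComplexPlane

/-- **Weighted Hardy-type inequality in the exterior region** (Lemma 3.3):
`‖σ₋^{−1} f(t,·)‖_{L²(|x|≥M+1)} ≤ C‖∇f(t,·)‖_{L²(|x|≥M+1)}` for compactly supported `f`. -/
theorem weighted_hardy_exterior (M : ℝ) (hM : 0 < M) :
    ∃ C > 0, ∀ f : F3,
      ContDiff ℝ 1 (fun p : ℝ × ℝ × ℝ => f p.1 p.2.1 p.2.2) →
      (∀ t x y, 0 ≤ t → M + t ≤ rad x y → f t x y = 0) →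
      ∀ t : ℝ, 0 ≤ t →
        L2nS (regOut M) (fun x y => f t x y / sm t x y)
          ≤ C * L2nS (regOut M)
              (fun x y => Real.sqrt ((px f t x y) ^ 2 + (py f t x y) ^ 2)) := by
  refine ⟨2 * (1 + |M|), by positivity, fun f hf hf0 t ht => ?_⟩
  have hg : ContDiff ℝ 1 fun z : ℂ => f t z.re z.im :=
    hf.comp (contDiff_const.prodMk Complex.equivRealProdCLM.contDiff)
  have hardy := weighted_hardy_exterior_general (μ := volume) (a := M + 1) hg
    (fun z hz => hf0 t z.re z.im ht (hz.trans_eq (rad_re_im z).symm)) (by positivity)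
  simpa only [L2nS_regOut_eq, sm, rad_re_im,
    sqrt_px_sq_add_py_sq_eq_norm_fderiv (hg.differentiable one_ne_zero _)] using hardy

end
end

section
/- Fix M > 0. There exists a constant C > 0, independent of t, such that for every f ∈ C²([0,∞)×ℝ²) with supp f(t,·) ⊂ {x : |x| ≤ M + t} for each t, every t ≥ 0, and every x with |x| ≥ M+1: σ(x)^{1/2} σ₋(t,x)^{−1} |f(t,x)| ≤ C Σ_{j=0}^{1} Σ_{|α|=0}^{2−j} ‖∂∇^α Ω^j f(t,·)‖_{L²({|x| ≥ M+1})}. -/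
/-!
Fix `t`, write `g = f(t, ·)` in polar coordinates `(r, θ)`, and let `R = M + t`, so that `g` and
`Ωg = ∂_θ g` vanish for `|x| > R`. For `h ∈ {g, Ωg}`, integrating `∂_r h` inwards from `r = R` and
using Cauchy–Schwarz together with `r ≤ s` on `[r, R]` gives
`r h(r, θ)² ≤ (R - r) ∫_r^R |∂_r h(s, θ)|² s ds`; integrating in `θ` and using `|∂_r h| ≤ |∇h|`,
the `L²` norm of `h` over the circle of radius `r` is controlled by `‖∇h‖` over the exterior region.
The one-dimensional Sobolev inequality in `θ` turns the bounds for `g` and `∂_θ g` into a pointwise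
bound for `g`, and `R - r ≤ (M + 1) σ₋`. Only the terms `‖∇f‖` and `‖∇Ωf‖` of the right-hand side
enter, so the junk values of `deriv` in the third-order terms, for `f` merely `C²`, are harmless.
-/

noncomputable section

open Real MeasureTheory Set

/-- The spatial derivatives `∇ = (∂₁, ∂₂)`. -/
def spi : Fin 2 → F3 → F3 := ![px, py]

/-- Iterated spatial derivative `∇^α`. -/
def SIter : List (Fin 2) → F3 → F3
  | [], f => f
  | a :: l, f => spi a (SIter l f)

/-! ### One-dimensional inequalities -/

lemma sq_intervalIntegral_le {u : ℝ → ℝ} {a b : ℝ} (hab : a ≤ b)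
    (hu : IntervalIntegrable u volume a b)
    (hu_sq : IntervalIntegrable (fun s => u s ^ 2) volume a b) :
    (∫ s in a..b, u s) ^ 2 ≤ (b - a) * ∫ s in a..b, u s ^ 2 := by
  rcases hab.eq_or_lt with rfl | hlt
  · simp
  have jensen : (⨍ s in a..b, u s) ^ 2 ≤ ⨍ s in a..b, u s ^ 2 := by
    rw [uIoc_of_le hab]
    rw [intervalIntegrable_iff_integrableOn_Ioc_of_le hab] at hu hu_sq
    exact even_two.convexOn_pow.map_set_average_le (by fun_prop) isClosed_univ
      (by simpa using hlt) (by simp) (by simp) hu hu_sq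
  have hlen : 0 < b - a := sub_pos.2 hlt
  rw [interval_average_eq_div, interval_average_eq_div, div_pow, div_le_div_iff₀ (by positivity)
    hlen] at jensen
  nlinarith

lemma sq_sub_le_mul_integral_deriv_sq {F F' : ℝ → ℝ} {a b : ℝ} (hab : a ≤ b)
    (hF : ∀ s ∈ Icc a b, HasDerivAt F (F' s) s) (hF' : ContinuousOn F' (Icc a b)) :
    (F b - F a) ^ 2 ≤ (b - a) * ∫ s in a..b, F' s ^ 2 := by
  rw [← uIcc_of_le hab] at hF hF'
  rw [← intervalIntegral.integral_eq_sub_of_hasDerivAt hF hF'.intervalIntegrable]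
  exact sq_intervalIntegral_le hab hF'.intervalIntegrable (hF'.pow 2).intervalIntegrable

lemma sq_sub_le_mul_integral_deriv_sq_of_mem_Icc {F F' : ℝ → ℝ} {a b x y : ℝ}
    (hF : ∀ s ∈ Icc a b, HasDerivAt F (F' s) s) (hF' : ContinuousOn F' (Icc a b))
    (hx : x ∈ Icc a b) (hy : y ∈ Icc a b) :
    (F x - F y) ^ 2 ≤ (b - a) * ∫ s in a..b, F' s ^ 2 := by
  wlog hyx : y ≤ x generalizing x y
  · rw [sub_sq_comm]
    exact this hy hx (le_of_not_ge hyx)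
  have hab : a ≤ b := hx.1.trans hx.2
  have hsub : Icc y x ⊆ Icc a b := Icc_subset_Icc hy.1 hx.2
  have enlarge : ∫ s in y..x, F' s ^ 2 ≤ ∫ s in a..b, F' s ^ 2 :=
    intervalIntegral.integral_mono_interval hy.1 hyx hx.2
      (Filter.Eventually.of_forall fun s => sq_nonneg (F' s))
      ((hF'.pow 2).intervalIntegrable_of_Icc hab)
  calc (F x - F y) ^ 2 ≤ (x - y) * ∫ s in y..x, F' s ^ 2 :=
        sq_sub_le_mul_integral_deriv_sq hyx (fun s hs => hF s (hsub hs)) (hF'.mono hsub)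
    _ ≤ (b - a) * ∫ s in a..b, F' s ^ 2 := by
        gcongr
        · exact intervalIntegral.integral_nonneg hyx fun s _ => sq_nonneg _
        · exact hx.2
        · exact hy.1

lemma sq_le_integral_sq_add_integral_deriv_sq {F F' : ℝ → ℝ} {a b x : ℝ} (hab : a < b)
    (hF : ∀ s ∈ Icc a b, HasDerivAt F (F' s) s) (hF' : ContinuousOn F' (Icc a b))
    (hx : x ∈ Icc a b) :
    F x ^ 2 ≤ 2 / (b - a) * (∫ y in a..b, F y ^ 2) + 2 * (b - a) * ∫ y in a..b, F' y ^ 2 := by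
  set E := ∫ y in a..b, F' y ^ 2
  have hlen : 0 < b - a := sub_pos.2 hab
  have hFc : ContinuousOn F (Icc a b) := fun s hs => (hF s hs).continuousAt.continuousWithinAt
  have hF_sq : IntervalIntegrable (fun y => 2 * F y ^ 2) volume a b :=
    ((hFc.pow 2).const_mul 2).intervalIntegrable_of_Icc hab.le
  have pointwise : ∀ y ∈ Icc a b, F x ^ 2 ≤ 2 * F y ^ 2 + 2 * (b - a) * E := fun y hy => by
    have hsplit := add_sq_le (a := F y) (b := F x - F y)
    rw [add_sub_cancel] at hsplit
    linarith [sq_sub_le_mul_integral_deriv_sq_of_mem_Icc hF hF' hx hy]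
  have averaged : (b - a) * F x ^ 2 ≤ 2 * (∫ y in a..b, F y ^ 2) + (b - a) * (2 * (b - a) * E) := by
    have := intervalIntegral.integral_mono_on hab.le intervalIntegrable_const
      (hF_sq.add intervalIntegrable_const) pointwise
    rwa [intervalIntegral.integral_const, intervalIntegral.integral_add hF_sq
      intervalIntegrable_const, intervalIntegral.integral_const_mul,
      intervalIntegral.integral_const, smul_eq_mul, smul_eq_mul] at this
  refine le_of_mul_le_mul_left (averaged.trans_eq ?_) hlen
  field_simp

lemma mul_sq_le_integral_mul_deriv_sq {v v' : ℝ → ℝ} {ρ r R : ℝ} (hρ : 0 ≤ ρ) (hρr : ρ ≤ r)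
    (hrR : r ≤ R) (hv : ∀ s ∈ Icc r R, HasDerivAt v (v' s) s) (hv' : ContinuousOn v' (Icc ρ R))
    (hvR : v R = 0) :
    r * v r ^ 2 ≤ (R - r) * ∫ s in ρ..R, s * v' s ^ 2 := by
  have hv'r : ContinuousOn v' (Icc r R) := hv'.mono (Icc_subset_Icc_left hρr)
  have cauchy_schwarz : v r ^ 2 ≤ (R - r) * ∫ s in r..R, v' s ^ 2 := by
    simpa [hvR] using sq_sub_le_mul_integral_deriv_sq hrR hv hv'r
  have insert_weight : r * ∫ s in r..R, v' s ^ 2 ≤ ∫ s in r..R, s * v' s ^ 2 := by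
    rw [← intervalIntegral.integral_const_mul]
    refine intervalIntegral.integral_mono_on hrR
      (ContinuousOn.intervalIntegrable_of_Icc hrR (by fun_prop))
      (ContinuousOn.intervalIntegrable_of_Icc hrR (by fun_prop)) fun s hs => ?_
    exact mul_le_mul_of_nonneg_right hs.1 (sq_nonneg _)
  have enlarge : ∫ s in r..R, s * v' s ^ 2 ≤ ∫ s in ρ..R, s * v' s ^ 2 := by
    refine intervalIntegral.integral_mono_interval hρr hrR le_rfl ?_
      (ContinuousOn.intervalIntegrable_of_Icc (hρr.trans hrR) (by fun_prop))
    filter_upwards [ae_restrict_mem measurableSet_Ioc] with s hs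
    exact mul_nonneg (hρ.trans hs.1.le) (sq_nonneg _)
  calc r * v r ^ 2 ≤ r * ((R - r) * ∫ s in r..R, v' s ^ 2) :=
        mul_le_mul_of_nonneg_left cauchy_schwarz (hρ.trans hρr)
    _ = (R - r) * (r * ∫ s in r..R, v' s ^ 2) := mul_left_comm ..
    _ ≤ (R - r) * ∫ s in ρ..R, s * v' s ^ 2 :=
        mul_le_mul_of_nonneg_left (insert_weight.trans enlarge) (sub_nonneg.2 hrR)

/-! ### Polar coordinates -/

/-- The closed Euclidean disc `{x : |x| ≤ R}`; the norm of `ℝ × ℝ` itself is the sup norm. -/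
def disc (R : ℝ) : Set (ℝ × ℝ) := {q | rad q.1 q.2 ≤ R}

lemma rad_polar (r θ : ℝ) : rad (r * cos θ) (r * sin θ) = |r| := by
  rw [rad, mul_pow, mul_pow, ← mul_add, cos_sq_add_sin_sq, mul_one, sqrt_sq_eq_abs]

lemma exists_polar (x y : ℝ) :
    ∃ θ ∈ Icc (-π) π, x = rad x y * cos θ ∧ y = rad x y * sin θ := by
  have hnorm : rad x y = ‖(⟨x, y⟩ : ℂ)‖ := (Complex.norm_eq_sqrt_sq_add_sq ⟨x, y⟩).symm
  refine ⟨Complex.arg ⟨x, y⟩, ⟨(Complex.neg_pi_lt_arg _).le, Complex.arg_le_pi _⟩, ?_, ?_⟩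
  · rw [hnorm, Complex.norm_mul_cos_arg]
  · rw [hnorm, Complex.norm_mul_sin_arg]

lemma continuous_rad : Continuous fun q : ℝ × ℝ => rad q.1 q.2 := by
  unfold rad
  fun_prop

lemma norm_le_rad (q : ℝ × ℝ) : ‖q‖ ≤ rad q.1 q.2 :=
  max_le (abs_le_sqrt (le_add_of_nonneg_right (sq_nonneg _)))
    (abs_le_sqrt (le_add_of_nonneg_left (sq_nonneg _)))

lemma isClosed_disc (R : ℝ) : IsClosed (disc R) :=
  isClosed_le continuous_rad continuous_const

lemma isCompact_disc (R : ℝ) : IsCompact (disc R) :=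
  (isCompact_closedBall 0 R).of_isClosed_subset (isClosed_disc R) fun q hq =>
    mem_closedBall_zero_iff.2 ((norm_le_rad q).trans hq)

lemma eq_zero_of_lt_rad {E : Type*} [Zero E] {R : ℝ} {h : ℝ × ℝ → E}
    (hR : Function.support h ⊆ disc R) {q : ℝ × ℝ} (hq : R < rad q.1 q.2) : h q = 0 :=
  Function.notMem_support.1 fun hmem => hq.not_ge (hR hmem)

lemma apply_polar_eq_zero_of_support_subset {R : ℝ} {h : ℝ × ℝ → ℝ}
    (hh : Continuous h) (hR : Function.support h ⊆ disc R) (θ : ℝ) :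
    h (R * cos θ, R * sin θ) = 0 := by
  have hbeyond : EqOn (fun s => h (s * cos θ, s * sin θ)) 0 (Ioi R) := fun s hs =>
    eq_zero_of_lt_rad hR (by rw [rad_polar]; exact hs.trans_le (le_abs_self s))
  exact hbeyond.closure (by fun_prop) continuous_zero (closure_Ioi R ▸ self_mem_Ici)

lemma setIntegral_le_rad_eq_setIntegral_polar {E : Type*} [NormedAddCommGroup E] [NormedSpace ℝ E]
    {ρ : ℝ} (hρ : 0 < ρ) (G : ℝ × ℝ → E) :
    ∫ q in {q : ℝ × ℝ | ρ ≤ rad q.1 q.2}, G q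
      = ∫ p in Ici ρ ×ˢ Ioo (-π) π, p.1 • G (p.1 * cos p.2, p.1 * sin p.2) := by
  have hext : MeasurableSet {q : ℝ × ℝ | ρ ≤ rad q.1 q.2} :=
    (isClosed_le continuous_const continuous_rad).measurableSet
  have hstrip : polarCoord.target ∩ Ici ρ ×ˢ univ = Ici ρ ×ˢ Ioo (-π) π := by
    rw [polarCoord_target, prod_inter_prod, inter_univ,
      inter_eq_right.2 (Ici_subset_Ioi.2 hρ)]
  rw [← integral_indicator hext, ← integral_comp_polarCoord_symm, ← hstrip,
    ← setIntegral_indicator (measurableSet_Ici.prod MeasurableSet.univ)]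
  refine setIntegral_congr_fun polarCoord.open_target.measurableSet fun p hp => ?_
  have hp₀ : 0 < p.1 := (polarCoord_target ▸ hp).1
  by_cases hρp : ρ ≤ p.1 <;>
    simp [indicator, polarCoord_symm_apply, rad_polar, abs_of_pos hp₀, hρp]

lemma setIntegral_le_rad_eq_polar {E : Type*} [NormedAddCommGroup E] [NormedSpace ℝ E]
    {ρ R : ℝ} (hρ : 0 < ρ) (hρR : ρ ≤ R) {G : ℝ × ℝ → E} (hG : Continuous G)
    (hR : Function.support G ⊆ disc R) :
    ∫ q in {q : ℝ × ℝ | ρ ≤ rad q.1 q.2}, G q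
      = ∫ θ in (-π)..π, ∫ s in ρ..R, s • G (s * cos θ, s * sin θ) := by
  set H : ℝ × ℝ → E := fun p => p.1 • G (p.1 * cos p.2, p.1 * sin p.2)
  have hH : Continuous H := by fun_prop
  have hH_int : IntegrableOn H (Icc ρ R ×ˢ Ioo (-π) π) :=
    (hH.continuousOn.integrableOn_compact (isCompact_Icc.prod isCompact_Icc)).mono_set
      (prod_mono_right Ioo_subset_Icc_self)
  have truncate : ∫ p in Ici ρ ×ˢ Ioo (-π) π, H p = ∫ p in Icc ρ R ×ˢ Ioo (-π) π, H p := by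
    refine setIntegral_eq_of_subset_of_forall_sdiff_eq_zero
      (measurableSet_Ici.prod measurableSet_Ioo) (prod_mono_left Icc_subset_Ici_self) ?_
    rintro ⟨s, θ⟩ ⟨⟨hs, hθ⟩, hnot⟩
    have hRs : R < s := lt_of_not_ge fun hsR => hnot ⟨⟨hs, hsR⟩, hθ⟩
    have hGs : G (s * cos θ, s * sin θ) = 0 :=
      eq_zero_of_lt_rad hR (by rw [rad_polar]; exact hRs.trans_le (le_abs_self s))
    simp only [H, hGs, smul_zero]
  rw [setIntegral_le_rad_eq_setIntegral_polar hρ, truncate, Measure.volume_eq_prod,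
    ← Measure.prod_restrict, integral_prod_symm _ (by rwa [Measure.prod_restrict]),
    intervalIntegral.integral_of_le (by linarith [pi_pos]), integral_Ioc_eq_integral_Ioo]
  simp only [intervalIntegral.integral_of_le hρR, integral_Icc_eq_integral_Ioc, H]

/-! ### Gradient energy in the exterior of a disc -/

/-- The squared Euclidean length `|∇g|²` of the gradient of a function on the plane. -/
def gradSq (g : ℝ × ℝ → ℝ) (q : ℝ × ℝ) : ℝ := fderiv ℝ g q (1, 0) ^ 2 + fderiv ℝ g q (0, 1) ^ 2

/-- The Dirichlet energy `∫ |∇g|²` over the exterior region `{x : |x| ≥ ρ}`. -/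
def exteriorEnergy (ρ : ℝ) (g : ℝ × ℝ → ℝ) : ℝ :=
  ∫ q in {q : ℝ × ℝ | ρ ≤ rad q.1 q.2}, gradSq g q

/-- The rotation field `Ωg = x₁∂₂g − x₂∂₁g`, i.e. `∂_θ g`, for a function on the plane. It is
the fixed-time version of `Om`, written as the derivative of `g` in the direction `(−x₂, x₁)`. -/
def angularDeriv (g : ℝ × ℝ → ℝ) (q : ℝ × ℝ) : ℝ := fderiv ℝ g q (-q.2, q.1)

lemma clm_apply_eq_fst_mul_add_snd_mul (L : ℝ × ℝ →L[ℝ] ℝ) (v : ℝ × ℝ) :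
    L v = v.1 * L (1, 0) + v.2 * L (0, 1) := by
  conv_lhs => rw [show v = v.1 • (1, 0) + v.2 • (0, 1) by simp]
  rw [map_add, map_smul, map_smul, smul_eq_mul, smul_eq_mul]

lemma sq_fderiv_cos_sin_le_gradSq (g : ℝ × ℝ → ℝ) (q : ℝ × ℝ) (θ : ℝ) :
    fderiv ℝ g q (cos θ, sin θ) ^ 2 ≤ gradSq g q := by
  rw [clm_apply_eq_fst_mul_add_snd_mul, gradSq]
  set a := fderiv ℝ g q (1, 0)
  set b := fderiv ℝ g q (0, 1)
  calc (cos θ * a + sin θ * b) ^ 2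
      ≤ (cos θ * a + sin θ * b) ^ 2 + (cos θ * b - sin θ * a) ^ 2 :=
        le_add_of_nonneg_right (sq_nonneg _)
    _ = (cos θ ^ 2 + sin θ ^ 2) * (a ^ 2 + b ^ 2) := by ring
    _ = a ^ 2 + b ^ 2 := by rw [cos_sq_add_sin_sq, one_mul]

lemma support_fderiv_subset_disc {R : ℝ} {g : ℝ × ℝ → ℝ} (hR : Function.support g ⊆ disc R) :
    Function.support (fderiv ℝ g) ⊆ disc R :=
  (support_fderiv_subset ℝ).trans (closure_minimal hR (isClosed_disc R))

lemma support_gradSq_subset_disc {R : ℝ} {g : ℝ × ℝ → ℝ} (hR : Function.support g ⊆ disc R) :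
    Function.support (gradSq g) ⊆ disc R := fun q hq =>
  support_fderiv_subset_disc hR fun h => hq (by simp [gradSq, h])

lemma continuous_gradSq {g : ℝ × ℝ → ℝ} (hg : ContDiff ℝ 1 g) : Continuous (gradSq g) := by
  have := hg.continuous_fderiv one_ne_zero
  unfold gradSq
  fun_prop

lemma hasDerivAt_ray {g : ℝ × ℝ → ℝ} (hg : Differentiable ℝ g) (θ s : ℝ) :
    HasDerivAt (fun s => g (s * cos θ, s * sin θ))
      (fderiv ℝ g (s * cos θ, s * sin θ) (cos θ, sin θ)) s :=
  (hg _).hasFDerivAt.comp_hasDerivAt s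
    ((hasDerivAt_mul_const (cos θ)).prodMk (hasDerivAt_mul_const (sin θ)))

lemma hasDerivAt_circle {g : ℝ × ℝ → ℝ} (hg : Differentiable ℝ g) (r θ : ℝ) :
    HasDerivAt (fun θ => g (r * cos θ, r * sin θ)) (angularDeriv g (r * cos θ, r * sin θ)) θ := by
  have hcircle := ((hasDerivAt_cos θ).const_mul r).prodMk ((hasDerivAt_sin θ).const_mul r)
  rw [mul_neg] at hcircle
  exact (hg _).hasFDerivAt.comp_hasDerivAt θ hcircle

lemma contDiff_angularDeriv {g : ℝ × ℝ → ℝ} {n : WithTop ℕ∞} (hg : ContDiff ℝ (n + 1) g) :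
    ContDiff ℝ n (angularDeriv g) :=
  (hg.fderiv_right le_rfl).clm_apply (contDiff_snd.neg.prodMk contDiff_fst)

lemma support_angularDeriv_subset_disc {R : ℝ} {g : ℝ × ℝ → ℝ}
    (hR : Function.support g ⊆ disc R) : Function.support (angularDeriv g) ⊆ disc R := fun q hq =>
  support_fderiv_subset_disc hR fun h => hq (by simp [angularDeriv, h])

lemma mul_sq_polar_le_integral_gradSq {ρ r R : ℝ} (hρ : 0 < ρ) (hρr : ρ ≤ r) (hrR : r ≤ R)
    {h : ℝ × ℝ → ℝ} (hh : ContDiff ℝ 1 h) (hR : Function.support h ⊆ disc R) (θ : ℝ) :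
    r * h (r * cos θ, r * sin θ) ^ 2
      ≤ (R - r) * ∫ s in ρ..R, s * gradSq h (s * cos θ, s * sin θ) := by
  have hρR : ρ ≤ R := hρr.trans hrR
  have hgrad : Continuous (gradSq h) := continuous_gradSq hh
  calc r * h (r * cos θ, r * sin θ) ^ 2
      ≤ (R - r) * ∫ s in ρ..R, s * fderiv ℝ h (s * cos θ, s * sin θ) (cos θ, sin θ) ^ 2 :=
        mul_sq_le_integral_mul_deriv_sq hρ.le hρr hrR
          (fun s _ => hasDerivAt_ray (hh.differentiable one_ne_zero) θ s)
          (Continuous.continuousOn (by fun_prop))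
          (apply_polar_eq_zero_of_support_subset hh.continuous hR θ)
    _ ≤ (R - r) * ∫ s in ρ..R, s * gradSq h (s * cos θ, s * sin θ) := by
        refine mul_le_mul_of_nonneg_left ?_ (sub_nonneg.2 hrR)
        refine intervalIntegral.integral_mono_on hρR
          (Continuous.intervalIntegrable (by fun_prop) _ _)
          (Continuous.intervalIntegrable (by fun_prop) _ _) fun s hs => ?_
        exact mul_le_mul_of_nonneg_left (sq_fderiv_cos_sin_le_gradSq h _ θ) (hρ.le.trans hs.1)

lemma mul_integral_circle_sq_le_exteriorEnergy {ρ r R : ℝ} (hρ : 0 < ρ) (hρr : ρ ≤ r)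
    (hrR : r ≤ R) {h : ℝ × ℝ → ℝ} (hh : ContDiff ℝ 1 h) (hR : Function.support h ⊆ disc R) :
    r * ∫ θ in (-π)..π, h (r * cos θ, r * sin θ) ^ 2 ≤ (R - r) * exteriorEnergy ρ h := by
  have hgrad : Continuous (gradSq h) := continuous_gradSq hh
  have hhc : Continuous h := hh.continuous
  rw [exteriorEnergy, setIntegral_le_rad_eq_polar hρ (hρr.trans hrR) hgrad
    (support_gradSq_subset_disc hR), ← intervalIntegral.integral_const_mul,
    ← intervalIntegral.integral_const_mul]
  simp only [smul_eq_mul]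
  exact intervalIntegral.integral_mono_on (by linarith [pi_pos])
    (Continuous.intervalIntegrable (by fun_prop) _ _)
    (Continuous.intervalIntegrable (by fun_prop) _ _)
    fun θ _ => mul_sq_polar_le_integral_gradSq hρ hρr hrR hh hR θ

lemma rad_mul_sq_le_exteriorEnergy {ρ R : ℝ} (hρ : 0 < ρ) {g : ℝ × ℝ → ℝ} (hg : ContDiff ℝ 2 g)
    (hR : Function.support g ⊆ disc R) {x y : ℝ} (hρr : ρ ≤ rad x y) (hrR : rad x y ≤ R) :
    rad x y * g (x, y) ^ 2
      ≤ 4 * π * (R - rad x y) * (exteriorEnergy ρ g + exteriorEnergy ρ (angularDeriv g)) := by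
  obtain ⟨θ, hθ, hx, hy⟩ := exists_polar x y
  set r := rad x y
  have hr : 0 ≤ r := hρ.le.trans hρr
  have hΩ : ContDiff ℝ 1 (angularDeriv g) := contDiff_angularDeriv hg
  have hΩc : Continuous (angularDeriv g) := hΩ.continuous
  have sobolev := sq_le_integral_sq_add_integral_deriv_sq (by linarith [pi_pos])
    (fun φ _ => hasDerivAt_circle (hg.differentiable two_ne_zero) r φ)
    (Continuous.continuousOn (by fun_prop)) hθ
  rw [← hx, ← hy] at sobolev
  set A := ∫ φ in (-π)..π, g (r * cos φ, r * sin φ) ^ 2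
  set B := ∫ φ in (-π)..π, angularDeriv g (r * cos φ, r * sin φ) ^ 2
  have circle_g : r * A ≤ (R - r) * exteriorEnergy ρ g :=
    mul_integral_circle_sq_le_exteriorEnergy hρ hρr hrR (hg.of_le one_le_two) hR
  have circle_Ωg : r * B ≤ (R - r) * exteriorEnergy ρ (angularDeriv g) :=
    mul_integral_circle_sq_le_exteriorEnergy hρ hρr hrR hΩ
      (support_angularDeriv_subset_disc hR)
  have hA : 0 ≤ A := intervalIntegral.integral_nonneg (by linarith [pi_pos]) fun _ _ => sq_nonneg _
  have hconst : 2 / (π - -π) ≤ 4 * π := by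
    rw [div_le_iff₀ (by linarith [pi_pos])]
    nlinarith [pi_gt_three]
  calc r * g (x, y) ^ 2 ≤ r * (2 / (π - -π) * A + 2 * (π - -π) * B) :=
        mul_le_mul_of_nonneg_left sobolev hr
    _ ≤ r * (4 * π * A + 2 * (π - -π) * B) := by gcongr
    _ = 4 * π * (r * A + r * B) := by ring
    _ ≤ 4 * π * ((R - r) * exteriorEnergy ρ g + (R - r) * exteriorEnergy ρ (angularDeriv g)) := by
        gcongr
    _ = 4 * π * (R - r) * (exteriorEnergy ρ g + exteriorEnergy ρ (angularDeriv g)) := by ring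

/-! ### Partial derivatives at a fixed time -/

lemma L2nS_nonneg (S : Set (ℝ × ℝ)) (g : ℝ → ℝ → ℝ) : 0 ≤ L2nS S g := sqrt_nonneg _

lemma sq_L2nS (S : Set (ℝ × ℝ)) (g : ℝ → ℝ → ℝ) : L2nS S g ^ 2 = ∫ q in S, g q.1 q.2 ^ 2 :=
  sq_sqrt (integral_nonneg fun _ => sq_nonneg _)

section FixedTime

variable {f : F3} {t : ℝ}

lemma px_eq_fderiv (hf : Differentiable ℝ fun p : ℝ × ℝ => f t p.1 p.2) (x y : ℝ) :
    px f t x y = fderiv ℝ (fun p : ℝ × ℝ => f t p.1 p.2) (x, y) (1, 0) :=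
  (HasFDerivAt.comp_hasDerivAt (f := fun s : ℝ => (s, y)) x (hf (x, y)).hasFDerivAt
    ((hasDerivAt_id x).prodMk (hasDerivAt_const x y))).deriv

lemma py_eq_fderiv (hf : Differentiable ℝ fun p : ℝ × ℝ => f t p.1 p.2) (x y : ℝ) :
    py f t x y = fderiv ℝ (fun p : ℝ × ℝ => f t p.1 p.2) (x, y) (0, 1) :=
  (HasFDerivAt.comp_hasDerivAt (f := fun s : ℝ => (x, s)) y (hf (x, y)).hasFDerivAt
    ((hasDerivAt_const y x).prodMk (hasDerivAt_id y))).deriv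

lemma Om_eq_angularDeriv (hf : Differentiable ℝ fun p : ℝ × ℝ => f t p.1 p.2) :
    (fun p : ℝ × ℝ => Om f t p.1 p.2) = angularDeriv fun p => f t p.1 p.2 := by
  funext p
  rw [angularDeriv, clm_apply_eq_fst_mul_add_snd_mul, Om, px_eq_fderiv hf, py_eq_fderiv hf]
  ring

lemma exteriorEnergy_eq_sum_sq_L2nS {R : ℝ} (hf : ContDiff ℝ 1 fun p : ℝ × ℝ => f t p.1 p.2)
    (hR : Function.support (fun p : ℝ × ℝ => f t p.1 p.2) ⊆ disc R) (M : ℝ) :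
    exteriorEnergy (M + 1) (fun p => f t p.1 p.2)
      = ∑ i : Fin 2, L2nS (regOut M) (spi i f t) ^ 2 := by
  have hint (e : ℝ × ℝ) : IntegrableOn
      (fun q => fderiv ℝ (fun p : ℝ × ℝ => f t p.1 p.2) q e ^ 2) (regOut M) := by
    refine (Continuous.integrable_of_hasCompactSupport (by fun_prop)
      (HasCompactSupport.intro (isCompact_disc R) fun q hq => ?_)).integrableOn
    have hq₀ : fderiv ℝ (fun p : ℝ × ℝ => f t p.1 p.2) q = 0 :=
      Function.notMem_support.1 fun h => hq (support_fderiv_subset_disc hR h)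
    simp [hq₀]
  have hd := hf.differentiable one_ne_zero
  simp only [Fin.sum_univ_two, spi, Matrix.cons_val_zero, Matrix.cons_val_one, sq_L2nS,
    px_eq_fderiv hd, py_eq_fderiv hd]
  exact integral_add (hint (1, 0)) (hint (0, 1))

end FixedTime

lemma sum_L2nS_spi_le {n : ℕ} (hn : 0 < n) (S : Set (ℝ × ℝ)) (f : F3) (t : ℝ) :
    ∑ i : Fin 2, L2nS S (spi i f t)
      ≤ ∑ a ∈ Finset.range n, ∑ w : Fin a → Fin 2, ∑ i : Fin 3,
          L2nS S (fun u v => pdi i (SIter (List.ofFn w) f) t u v) := by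
  have order_zero : ∑ i : Fin 2, L2nS S (spi i f t)
      ≤ ∑ w : Fin 0 → Fin 2, ∑ i : Fin 3,
          L2nS S (fun u v => pdi i (SIter (List.ofFn w) f) t u v) := by
    rw [Fintype.sum_unique (ι := Fin 0 → Fin 2), Fin.sum_univ_succ (n := 2)]
    exact le_add_of_nonneg_left (L2nS_nonneg _ _)
  refine order_zero.trans (Finset.single_le_sum (f := fun a => ∑ w : Fin a → Fin 2, ∑ i : Fin 3,
    L2nS S (fun u v => pdi i (SIter (List.ofFn w) f) t u v)) (fun a _ => ?_)
    (Finset.mem_range.2 hn))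
  exact Finset.sum_nonneg fun w _ => Finset.sum_nonneg fun i _ => L2nS_nonneg _ _

lemma one_le_sm (t x y : ℝ) : 1 ≤ sm t x y :=
  le_add_of_nonneg_right (abs_nonneg _)

lemma add_sub_rad_le_mul_sm {M : ℝ} (hM : 0 ≤ M) (t x y : ℝ) :
    M + t - rad x y ≤ (M + 1) * sm t x y := by
  have hsm : t - rad x y ≤ sm t x y - 1 := by
    rw [sm, add_sub_cancel_left]
    exact le_abs_self _
  nlinarith [one_le_sm t x y]

lemma rad_mul_sq_le_sum_sq_L2nS {M t : ℝ} (hM : 0 < M + 1) {f : F3}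
    (hf : ContDiff ℝ 2 fun p : ℝ × ℝ => f t p.1 p.2) {R : ℝ}
    (hR : Function.support (fun p : ℝ × ℝ => f t p.1 p.2) ⊆ disc R) {x y : ℝ}
    (hMr : M + 1 ≤ rad x y) (hrR : rad x y ≤ R) :
    rad x y * f t x y ^ 2
      ≤ 4 * π * (R - rad x y) *
          ∑ j ∈ Finset.range 2, ∑ i : Fin 2, L2nS (regOut M) (spi i (Om^[j] f) t) ^ 2 := by
  have hOm := Om_eq_angularDeriv (hf.differentiable two_ne_zero)
  have energy_Om := exteriorEnergy_eq_sum_sq_L2nS (hOm ▸ contDiff_angularDeriv hf)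
    (hOm ▸ support_angularDeriv_subset_disc hR) M
  rw [hOm] at energy_Om
  rw [Finset.sum_range_succ, Finset.sum_range_one, Function.iterate_zero_apply,
    Function.iterate_one, ← energy_Om, ← exteriorEnergy_eq_sum_sq_L2nS (hf.of_le one_le_two) hR]
  exact rad_mul_sq_le_exteriorEnergy hM hf hR hMr hrR

lemma one_add_rad_mul_sq_le {M : ℝ} (hM : 0 ≤ M) {f : F3} {t : ℝ}
    (hf : ContDiff ℝ 2 fun p : ℝ × ℝ => f t p.1 p.2)
    (hsupp : ∀ x y, M + t < rad x y → f t x y = 0) {x y : ℝ} (hr : M + 1 ≤ rad x y) :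
    (1 + rad x y) * f t x y ^ 2
      ≤ 8 * π * (M + 1) * sm t x y *
          ∑ j ∈ Finset.range 2, ∑ i : Fin 2, L2nS (regOut M) (spi i (Om^[j] f) t) ^ 2 := by
  set E := ∑ j ∈ Finset.range 2, ∑ i : Fin 2, L2nS (regOut M) (spi i (Om^[j] f) t) ^ 2
  have hsm : 0 ≤ sm t x y := zero_le_one.trans (one_le_sm t x y)
  rcases lt_or_ge (M + t) (rad x y) with houtside | hinside
  · rw [hsupp x y houtside, zero_pow two_ne_zero, mul_zero]
    positivity
  have hdisc : Function.support (fun p : ℝ × ℝ => f t p.1 p.2) ⊆ disc (M + t) := fun p hp =>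
    show rad p.1 p.2 ≤ M + t from le_of_not_gt fun h => hp (hsupp _ _ h)
  calc (1 + rad x y) * f t x y ^ 2 ≤ 2 * rad x y * f t x y ^ 2 := by
        gcongr
        linarith
    _ = 2 * (rad x y * f t x y ^ 2) := mul_assoc ..
    _ ≤ 2 * (4 * π * (M + t - rad x y) * E) :=
        mul_le_mul_of_nonneg_left
          (rad_mul_sq_le_sum_sq_L2nS (by linarith) hf hdisc hr hinside) zero_le_two
    _ ≤ 2 * (4 * π * ((M + 1) * sm t x y) * E) := by
        gcongr
        exact add_sub_rad_le_mul_sm hM t x y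
    _ = 8 * π * (M + 1) * sm t x y * E := by ring

theorem weighted_pointwise_exterior_general {M : ℝ} (hM : 0 ≤ M) {f : F3} {t : ℝ}
    (hf : ContDiff ℝ 2 fun p : ℝ × ℝ => f t p.1 p.2)
    (hsupp : ∀ x y, M + t < rad x y → f t x y = 0) {x y : ℝ} (hr : M + 1 ≤ rad x y) :
    √(1 + rad x y) * |f t x y| / √(sm t x y)
      ≤ √(8 * π * (M + 1)) *
          ∑ j ∈ Finset.range 2, ∑ i : Fin 2, L2nS (regOut M) (spi i (Om^[j] f) t) := by
  have hterm (j : ℕ) (i : Fin 2) : 0 ≤ L2nS (regOut M) (spi i (Om^[j] f) t) := L2nS_nonneg _ _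
  have hrow (j : ℕ) : 0 ≤ ∑ i : Fin 2, L2nS (regOut M) (spi i (Om^[j] f) t) :=
    Finset.sum_nonneg fun i _ => hterm j i
  set S := ∑ j ∈ Finset.range 2, ∑ i : Fin 2, L2nS (regOut M) (spi i (Om^[j] f) t)
  have hS : 0 ≤ S := Finset.sum_nonneg fun j _ => hrow j
  have hsm : 0 < sm t x y := zero_lt_one.trans_le (one_le_sm t x y)
  have sum_sq_le : ∑ j ∈ Finset.range 2, ∑ i : Fin 2, L2nS (regOut M) (spi i (Om^[j] f) t) ^ 2
      ≤ S ^ 2 :=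
    (Finset.sum_le_sum fun j _ => Finset.sum_sq_le_sq_sum_of_nonneg fun i _ => hterm j i).trans
      (Finset.sum_sq_le_sq_sum_of_nonneg fun j _ => hrow j)
  have squared : (1 + rad x y) * f t x y ^ 2 ≤ 8 * π * (M + 1) * sm t x y * S ^ 2 :=
    (one_add_rad_mul_sq_le hM hf hsupp hr).trans
      (mul_le_mul_of_nonneg_left sum_sq_le (by positivity))
  have hr₀ : 0 ≤ 1 + rad x y := by linarith
  rw [div_le_iff₀ (by positivity), mul_right_comm, ← sqrt_mul (by positivity)]
  refine le_of_sq_le_sq ?_ (by positivity)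
  rwa [mul_pow, mul_pow, sq_sqrt hr₀, sq_sqrt (by positivity), sq_abs]

/-- **Weighted pointwise estimate in the exterior region** (Lemma 3.4):
`σ^{1/2}σ₋^{−1}|f(t,x)| ≤ C Σ_{j=0}^{1} Σ_{|α|≤2−j} ‖∂∇^αΩ^j f(t,·)‖_{L²(|x|≥M+1)}`. -/
theorem weighted_pointwise_exterior (M : ℝ) (hM : 0 < M) :
    ∃ C > 0, ∀ f : F3,
      ContDiff ℝ 2 (fun p : ℝ × ℝ × ℝ => f p.1 p.2.1 p.2.2) →
      (∀ t x y, 0 ≤ t → M + t ≤ rad x y → f t x y = 0) →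
      ∀ t x y : ℝ, 0 ≤ t → M + 1 ≤ rad x y →
        Real.sqrt (1 + rad x y) * |f t x y| / sm t x y
          ≤ C * ∑ j ∈ Finset.range 2, ∑ a ∈ Finset.range (3 - j),
              ∑ w : Fin a → Fin 2, ∑ i : Fin 3,
                L2nS (regOut M)
                  (fun u v => pdi i (SIter (List.ofFn w) ((Om)^[j] f)) t u v) := by
  refine ⟨√(8 * π * (M + 1)), by positivity, fun f hf hsupp t x y ht hr => ?_⟩
  have hslice : ContDiff ℝ 2 fun p : ℝ × ℝ => f t p.1 p.2 :=
    hf.comp (contDiff_const.prodMk contDiff_id : ContDiff ℝ 2 fun p : ℝ × ℝ => (t, p))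
  calc √(1 + rad x y) * |f t x y| / sm t x y
      ≤ √(1 + rad x y) * |f t x y| / √(sm t x y) := by
        have hsm := one_le_sm t x y
        gcongr
        exact sqrt_le_self_iff.2 (.inr hsm)
    _ ≤ √(8 * π * (M + 1)) *
          ∑ j ∈ Finset.range 2, ∑ i : Fin 2, L2nS (regOut M) (spi i (Om^[j] f) t) :=
        weighted_pointwise_exterior_general hM.le hslice (fun x y h => hsupp t x y ht h.le) hr
    _ ≤ _ := by
        gcongr with j hj
        exact sum_L2nS_spi_le (Nat.sub_pos_of_lt (by linarith [Finset.mem_range.1 hj])) _ _ _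

end
end
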